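/- arXiv:2007.10989 — 4 statements merged into one kernel-verified Lean document; each statement's English description precedes it below -/
import Mathlib

section
/- Let (A_i, φ_i) for i in an index set I be a family of non-commutative probability spaces. Then there exists a non-commutative probability space (A, φ) together with injective unital ℂ-algebra homomorphisms ι_i : A_i → A for each i ∈ I such that φ ∘ ι_i = φ_i for every i ∈ I, and the images ι_i(A_i), i ∈ I, are freely independent in (A, φ) in the moment sense. -/
open scoped BigOperators ComplexOrder

/-- Free independence, in the moment sense, of a family of subsets `S i` of `A`:
`φ(a_1 ⋯ a_k) = 0` whenever `a_j ∈ S (idx j)`, each `φ(a_j) = 0`, and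
consecutive indices differ. -/
def FreeIndepMoment {A : Type*} [Ring A] [Algebra ℂ A] {ι : Type*}
    (φ : A →ₗ[ℂ] ℂ) (S : ι → Set A) : Prop :=
  ∀ (k : ℕ), 0 < k → ∀ (a : Fin k → A) (idx : Fin k → ι),
    (∀ j, a j ∈ S (idx j)) → (∀ j, φ (a j) = 0) →
    (∀ j j' : Fin k, (j : ℕ) + 1 = (j' : ℕ) → idx j ≠ idx j') →
    φ (List.ofFn a).prod = 0

/- Write `a° = a - φ a • 1`. Inside the tensor algebra of `⨁ i, A i`, consider the span of the
products `a₁ ⋯ aₙ` of centred elements of the `A i` with neighbouring indices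
different. If `t` is such a product not starting in `A i`, put `x ⋆ t = φ x • t + x° t` for
`x : A i`; these elements span, and `a (x ⋆ t) = (a x) ⋆ t` defines a representation of `A i`.
Acting on the vacuum vector `1`, an alternating product of centred elements of the free product
gives the corresponding tensor, whose constant term vanishes. -/

section LeftRecursion

variable {R M N : Type*} [CommSemiring R] [AddCommMonoid M] [Module R M]
  [AddCommMonoid N] [Module R N]

/-- The algebra homomorphism behind `tensorCases`: on the first component the tensor algebra acts
by left multiplication, and a generator `m` overwrites the second component by `f m t`, where `t`
is the first one. -/
noncomputable def tensorCasesHom (f : M →ₗ[R] TensorAlgebra R M →ₗ[R] N) :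
    TensorAlgebra R M →ₐ[R] Module.End R (TensorAlgebra R M × N) :=
  TensorAlgebra.lift R
    (LinearMap.lcomp R _ (LinearMap.fst R _ N) ∘ₗ
      (LinearMap.prodEquiv R).toLinearMap ∘ₗ
        (LinearMap.mul R (TensorAlgebra R M) ∘ₗ TensorAlgebra.ι R).prod f)

theorem tensorCasesHom_ι_apply (f : M →ₗ[R] TensorAlgebra R M →ₗ[R] N) (m : M)
    (p : TensorAlgebra R M × N) :
    tensorCasesHom f (TensorAlgebra.ι R m) p = (TensorAlgebra.ι R m * p.1, f m p.1) := by
  simp [tensorCasesHom]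

theorem fst_tensorCasesHom_apply (f : M →ₗ[R] TensorAlgebra R M →ₗ[R] N)
    (t : TensorAlgebra R M) (p : TensorAlgebra R M × N) :
    (tensorCasesHom f t p).1 = t * p.1 := by
  induction t using TensorAlgebra.induction generalizing p with
  | algebraMap r => simp [Algebra.smul_def]
  | ι m => rw [tensorCasesHom_ι_apply]
  | mul s t hs ht => rw [map_mul, Module.End.mul_apply, hs, ht, mul_assoc]
  | add s t hs ht => rw [map_add, LinearMap.add_apply, Prod.fst_add, hs, ht, add_mul]

/-- The linear map on the tensor algebra sending `1` to `n` and `m ⊗ t` to `f m t`, for `m : M`. -/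
noncomputable def tensorCases (n : N) (f : M →ₗ[R] TensorAlgebra R M →ₗ[R] N) :
    TensorAlgebra R M →ₗ[R] N :=
  LinearMap.snd R _ _ ∘ₗ LinearMap.applyₗ (1, n) ∘ₗ (tensorCasesHom f).toLinearMap

theorem tensorCases_one (n : N) (f : M →ₗ[R] TensorAlgebra R M →ₗ[R] N) :
    tensorCases n f 1 = n := by
  simp [tensorCases]

theorem tensorCases_ι_mul (n : N) (f : M →ₗ[R] TensorAlgebra R M →ₗ[R] N) (m : M)
    (t : TensorAlgebra R M) :
    tensorCases n f (TensorAlgebra.ι R m * t) = f m t := by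
  simp [tensorCases, tensorCasesHom_ι_apply, fst_tensorCasesHom_apply]

end LeftRecursion

section FreeProductState

open LinearAlgebra (FreeProduct)
open LinearAlgebra.FreeProduct (FreeTensorAlgebra)

variable {R I : Type*} [CommRing R] {A : I → Type*} [∀ i, Ring (A i)] [∀ i, Algebra R (A i)]

/-- Words in the disjoint union of the `A i` whose letters are centred with respect to `φ` and in
which neighbouring letters have different indices. -/
structure IsReducedWord (φ : ∀ i, A i →ₗ[R] R) (l : List (Σ i, A i)) : Prop where
  centred : ∀ p ∈ l, φ p.1 p.2 = 0
  alternating : l.IsChain fun p q => p.1 ≠ q.1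

theorem isReducedWord_nil (φ : ∀ i, A i →ₗ[R] R) : IsReducedWord φ [] :=
  ⟨by simp, .nil⟩

theorem isReducedWord_cons {φ : ∀ i, A i →ₗ[R] R} {i : I} {a : A i} {l : List (Σ i, A i)} :
    IsReducedWord φ (⟨i, a⟩ :: l) ↔
      φ i a = 0 ∧ (∀ p ∈ l.head?, i ≠ p.1) ∧ IsReducedWord φ l := by
  refine ⟨fun ⟨hc, ha⟩ => ?_, fun ⟨ha, hi, hl⟩ => ⟨?_, List.isChain_cons.2 ⟨hi, hl.alternating⟩⟩⟩
  · rw [List.forall_mem_cons] at hc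
    rw [List.isChain_cons] at ha
    exact ⟨hc.1, ha.1, hc.2, ha.2⟩
  · exact List.forall_mem_cons.2 ⟨ha, hl.centred⟩

variable [DecidableEq I]

variable (R) in
/-- An element of `A i`, as a degree one tensor. -/
noncomputable def letter (i : I) : A i →ₗ[R] FreeTensorAlgebra R A :=
  TensorAlgebra.ι R ∘ₗ DirectSum.lof R I A i

theorem letter_injective (i : I) : Function.Injective (letter R i : A i → FreeTensorAlgebra R A) :=
  TensorAlgebra.ι_leftInverse.injective.comp (DirectSum.of_injective i)

theorem algebraMapInv_letter (i : I) (a : A i) :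
    TensorAlgebra.algebraMapInv (letter R i a) = 0 := by
  simp [letter, TensorAlgebra.algebraMapInv]

variable (R) in
/-- The pure tensor spelled by a word. -/
noncomputable def wordTensor (l : List (Σ i, A i)) : FreeTensorAlgebra R A :=
  (l.map fun p => letter R p.1 p.2).prod

theorem wordTensor_nil : wordTensor R ([] : List (Σ i, A i)) = 1 := rfl

theorem wordTensor_cons (i : I) (a : A i) (l : List (Σ i, A i)) :
    wordTensor R (⟨i, a⟩ :: l) = letter R i a * wordTensor R l :=
  List.prod_cons

theorem algebraMapInv_wordTensor {l : List (Σ i, A i)} (hl : l ≠ []) :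
    TensorAlgebra.algebraMapInv (wordTensor R l) = 0 := by
  obtain ⟨⟨i, a⟩, l, rfl⟩ := List.exists_cons_of_ne_nil hl
  rw [wordTensor_cons, map_mul, algebraMapInv_letter, zero_mul]

variable (φ : ∀ i, A i →ₗ[R] R)

/-- The decomposition `a = φ a + (a - φ a)` of `a : A i` into scalar and centred parts, read in the
tensor algebra. -/
noncomputable def splitTensor (i : I) : A i →ₗ[R] FreeTensorAlgebra R A :=
  Algebra.linearMap R _ ∘ₗ φ i + letter R i ∘ₗ (LinearMap.id - (φ i).smulRight 1)

theorem splitTensor_apply (i : I) (a : A i) :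
    splitTensor φ i a = algebraMap R _ (φ i a) + letter R i (a - φ i a • 1) := rfl

theorem splitTensor_of_centred {i : I} {a : A i} (ha : φ i a = 0) :
    splitTensor φ i a = letter R i a := by
  simp [splitTensor_apply, ha]

theorem splitTensor_one {i : I} (hφ : φ i 1 = 1) : splitTensor φ i 1 = 1 := by
  simp [splitTensor_apply, hφ]

theorem algebraMapInv_splitTensor (i : I) (a : A i) :
    TensorAlgebra.algebraMapInv (splitTensor φ i a) = φ i a := by
  rw [splitTensor_apply, map_add, algebraMapInv_letter, add_zero,
    TensorAlgebra.algebraMap_leftInverse]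

theorem splitTensor_injective (i : I) : Function.Injective (splitTensor φ i) := by
  refine (injective_iff_map_eq_zero _).2 fun a ha => ?_
  have hφa : φ i a = 0 := by rw [← algebraMapInv_splitTensor φ i a, ha, map_zero]
  rw [splitTensor_of_centred φ hφa] at ha
  exact (map_eq_zero_iff _ (letter_injective i)).1 ha

/-- The operator by which `a : A i` acts on the tensor algebra: it multiplies `a` into the first
letter if that letter lies in `A i`, prepends `a` otherwise, and then splits the resulting letter.
In general it is multiplicative in `a` only on `reducedTensors φ`. -/
noncomputable def leftAction (i : I) (a : A i) :
    FreeTensorAlgebra R A →ₗ[R] FreeTensorAlgebra R A :=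
  tensorCases (splitTensor φ i a) (LinearMap.mul R _ ∘ₗ DirectSum.toModule R I _
    (Function.update (fun j => LinearMap.mulLeft R (splitTensor φ i a) ∘ₗ letter R j) i
      (splitTensor φ i ∘ₗ LinearMap.mulLeft R a)))

theorem leftAction_letter_mul (i : I) (a b : A i) (t : FreeTensorAlgebra R A) :
    leftAction φ i a (letter R i b * t) = splitTensor φ i (a * b) * t := by
  simp [leftAction, letter, tensorCases_ι_mul]

theorem leftAction_wordTensor {i : I} (a : A i) {l : List (Σ i, A i)}
    (hl : ∀ p ∈ l.head?, i ≠ p.1) :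
    leftAction φ i a (wordTensor R l) = splitTensor φ i a * wordTensor R l := by
  match l with
  | [] => rw [wordTensor_nil, mul_one, leftAction, tensorCases_one]
  | ⟨j, b⟩ :: l =>
    have hji : j ≠ i := (hl ⟨j, b⟩ rfl).symm
    simp [wordTensor_cons, leftAction, letter, tensorCases_ι_mul, hji, mul_assoc]

theorem leftAction_splitTensor_mul_wordTensor {i : I} (a x : A i) {l : List (Σ i, A i)}
    (hl : ∀ p ∈ l.head?, i ≠ p.1) :
    leftAction φ i a (splitTensor φ i x * wordTensor R l) =
      splitTensor φ i (a * x) * wordTensor R l := by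
  have hax : a * x = φ i x • a + a * (x - φ i x • 1) := by
    rw [mul_sub, mul_smul_comm, mul_one, add_sub_cancel]
  rw [splitTensor_apply φ i x, add_mul, ← Algebra.smul_def, map_add, map_smul,
    leftAction_wordTensor φ a hl, leftAction_letter_mul, hax, map_add, map_smul, add_mul,
    smul_mul_assoc]

/-- The module spanned by the tensors of reduced words: the algebraic counterpart of the free
product of the pointed modules `(A i, 1)`. -/
noncomputable def reducedTensors : Submodule R (FreeTensorAlgebra R A) :=
  Submodule.span R (wordTensor R '' {l | IsReducedWord φ l})

variable {φ}

theorem wordTensor_mem_reducedTensors {l : List (Σ i, A i)} (hl : IsReducedWord φ l) :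
    wordTensor R l ∈ reducedTensors φ :=
  Submodule.subset_span ⟨l, hl, rfl⟩

theorem splitTensor_mul_wordTensor_mem_reducedTensors {i : I} (hφ : φ i 1 = 1) (x : A i)
    {l : List (Σ i, A i)} (hl : IsReducedWord φ l) (hi : ∀ p ∈ l.head?, i ≠ p.1) :
    splitTensor φ i x * wordTensor R l ∈ reducedTensors φ := by
  have hcentred : φ i (x - φ i x • 1) = 0 := by simp [hφ]
  rw [splitTensor_apply, add_mul, ← Algebra.smul_def, ← wordTensor_cons]
  exact add_mem (Submodule.smul_mem _ _ (wordTensor_mem_reducedTensors hl))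
    (wordTensor_mem_reducedTensors (isReducedWord_cons.2 ⟨hcentred, hi, hl⟩))

theorem IsReducedWord.exists_wordTensor_eq_splitTensor_mul {i : I} (hφ : φ i 1 = 1)
    {l : List (Σ i, A i)} (hl : IsReducedWord φ l) :
    ∃ (x : A i) (l' : List (Σ i, A i)), IsReducedWord φ l' ∧ (∀ p ∈ l'.head?, i ≠ p.1) ∧
      wordTensor R l = splitTensor φ i x * wordTensor R l' := by
  by_cases hi : ∀ p ∈ l.head?, i ≠ p.1
  · exact ⟨1, l, hl, hi, by rw [splitTensor_one φ hφ, one_mul]⟩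
  · match l with
    | [] => simp at hi
    | ⟨j, b⟩ :: l' =>
      obtain rfl : i = j := by simpa using hi
      obtain ⟨hb, hi', hl'⟩ := isReducedWord_cons.1 hl
      exact ⟨b, l', hl', hi', by rw [wordTensor_cons, splitTensor_of_centred φ hb]⟩

theorem reducedTensors_eq_span_splitTensor_mul {i : I} (hφ : φ i 1 = 1) :
    reducedTensors φ = Submodule.span R {t | ∃ (x : A i) (l : List (Σ i, A i)),
      IsReducedWord φ l ∧ (∀ p ∈ l.head?, i ≠ p.1) ∧
        t = splitTensor φ i x * wordTensor R l} := by
  refine le_antisymm (Submodule.span_mono ?_) (Submodule.span_le.2 ?_)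
  · rintro _ ⟨l, hl, rfl⟩
    exact hl.exists_wordTensor_eq_splitTensor_mul hφ
  · rintro _ ⟨x, l, hl, hi, rfl⟩
    exact splitTensor_mul_wordTensor_mem_reducedTensors hφ x hl hi

theorem leftAction_mem_reducedTensors {i : I} (hφ : φ i 1 = 1) (a : A i) :
    ∀ t ∈ reducedTensors φ, leftAction φ i a t ∈ reducedTensors φ := by
  suffices h : reducedTensors φ ≤ (reducedTensors φ).comap (leftAction φ i a) from h
  conv_lhs => rw [reducedTensors_eq_span_splitTensor_mul hφ]
  refine Submodule.span_le.2 ?_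
  rintro _ ⟨x, l, hl, hi, rfl⟩
  rw [SetLike.mem_coe, Submodule.mem_comap, leftAction_splitTensor_mul_wordTensor φ a x hi]
  exact splitTensor_mul_wordTensor_mem_reducedTensors hφ (a * x) hl hi

theorem eqOn_reducedTensors {N : Type*} [AddCommMonoid N] [Module R N] {i : I} (hφ : φ i 1 = 1)
    {f g : FreeTensorAlgebra R A →ₗ[R] N}
    (h : ∀ (x : A i) (l : List (Σ i, A i)), (∀ p ∈ l.head?, i ≠ p.1) →
      f (splitTensor φ i x * wordTensor R l) = g (splitTensor φ i x * wordTensor R l)) :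
    Set.EqOn f g (reducedTensors φ) := by
  rw [reducedTensors_eq_span_splitTensor_mul hφ, LinearMap.eqOn_span_iff]
  rintro _ ⟨x, l, -, hi, rfl⟩
  exact h x l hi

theorem eqOn_leftAction_add {i : I} (hφ : φ i 1 = 1) (a b : A i) :
    Set.EqOn (leftAction φ i (a + b)) ⇑(leftAction φ i a + leftAction φ i b)
      (reducedTensors φ) :=
  eqOn_reducedTensors hφ fun x l hl => by
    simp only [LinearMap.add_apply, leftAction_splitTensor_mul_wordTensor φ _ x hl, add_mul,
      map_add]

theorem eqOn_leftAction_smul {i : I} (hφ : φ i 1 = 1) (r : R) (a : A i) :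
    Set.EqOn (leftAction φ i (r • a)) ⇑(r • leftAction φ i a) (reducedTensors φ) :=
  eqOn_reducedTensors hφ fun x l hl => by
    simp only [LinearMap.smul_apply, leftAction_splitTensor_mul_wordTensor φ _ x hl,
      smul_mul_assoc, map_smul]

theorem eqOn_leftAction_one {i : I} (hφ : φ i 1 = 1) :
    Set.EqOn (leftAction φ i 1) (LinearMap.id : _ →ₗ[R] FreeTensorAlgebra R A)
      (reducedTensors φ) :=
  eqOn_reducedTensors hφ fun x l hl => by
    rw [leftAction_splitTensor_mul_wordTensor φ 1 x hl, one_mul, LinearMap.id_apply]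

theorem eqOn_leftAction_mul {i : I} (hφ : φ i 1 = 1) (a b : A i) :
    Set.EqOn (leftAction φ i (a * b)) (leftAction φ i a ∘ₗ leftAction φ i b)
      (reducedTensors φ) :=
  eqOn_reducedTensors hφ fun x l hl => by
    simp only [LinearMap.comp_apply, leftAction_splitTensor_mul_wordTensor φ _ _ hl, mul_assoc]

/-- The representation of `A i` on the span of the reduced words. -/
noncomputable def reducedRep {i : I} (hφ : φ i 1 = 1) :
    A i →ₐ[R] Module.End R (reducedTensors φ) :=
  AlgHom.ofLinearMap
    { toFun a := (leftAction φ i a).restrict (leftAction_mem_reducedTensors hφ a)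
      map_add' a b := LinearMap.ext fun t => Subtype.ext (eqOn_leftAction_add hφ a b t.2)
      map_smul' r a := LinearMap.ext fun t => Subtype.ext (eqOn_leftAction_smul hφ r a t.2) }
    (LinearMap.ext fun t => Subtype.ext (eqOn_leftAction_one hφ t.2))
    (fun a b => LinearMap.ext fun t => Subtype.ext (eqOn_leftAction_mul hφ a b t.2))

theorem coe_reducedRep_apply {i : I} (hφ : φ i 1 = 1) (a : A i) (t : reducedTensors φ) :
    (reducedRep hφ a t : FreeTensorAlgebra R A) = leftAction φ i a t := rfl

variable (φ) in
/-- The vacuum vector, spelled by the empty word. -/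
noncomputable def vacuumTensor : reducedTensors φ :=
  ⟨1, wordTensor_mem_reducedTensors (isReducedWord_nil φ)⟩

theorem coe_reducedRep_vacuumTensor {i : I} (hφ : φ i 1 = 1) (a : A i) :
    (reducedRep hφ a (vacuumTensor φ) : FreeTensorAlgebra R A) = splitTensor φ i a := by
  have h := leftAction_wordTensor φ a (l := []) (by simp)
  rwa [wordTensor_nil, mul_one] at h

theorem coe_prod_reducedRep_vacuumTensor (hφ : ∀ i, φ i 1 = 1) {l : List (Σ i, A i)}
    (hl : IsReducedWord φ l) :
    ((l.map fun p => reducedRep (hφ p.1) p.2).prod (vacuumTensor φ) : FreeTensorAlgebra R A) =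
      wordTensor R l := by
  induction l with
  | nil => rfl
  | cons p l ih =>
    obtain ⟨i, a⟩ := p
    obtain ⟨ha, hi, hl⟩ := isReducedWord_cons.1 hl
    rw [List.map_cons, List.prod_cons, Module.End.mul_apply, coe_reducedRep_apply, ih hl,
      leftAction_wordTensor φ a hi, splitTensor_of_centred φ ha, wordTensor_cons]

variable (φ) in
/-- The vacuum expectation: the constant term of the image of the vacuum vector. -/
noncomputable def vacuumState : Module.End R (reducedTensors φ) →ₗ[R] R :=
  TensorAlgebra.algebraMapInv.toLinearMap ∘ₗ (reducedTensors φ).subtype ∘ₗ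
    LinearMap.applyₗ (vacuumTensor φ)

theorem vacuumState_apply (T : Module.End R (reducedTensors φ)) :
    vacuumState φ T = TensorAlgebra.algebraMapInv (T (vacuumTensor φ) : FreeTensorAlgebra R A) :=
  rfl

theorem vacuumState_one : vacuumState φ 1 = 1 :=
  map_one TensorAlgebra.algebraMapInv

theorem vacuumState_reducedRep {i : I} (hφ : φ i 1 = 1) (a : A i) :
    vacuumState φ (reducedRep hφ a) = φ i a := by
  rw [vacuumState_apply, coe_reducedRep_vacuumTensor, algebraMapInv_splitTensor]

theorem vacuumState_prod_reducedRep (hφ : ∀ i, φ i 1 = 1) {l : List (Σ i, A i)} (hne : l ≠ [])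
    (hl : IsReducedWord φ l) :
    vacuumState φ (l.map fun p => reducedRep (hφ p.1) p.2).prod = 0 := by
  rw [vacuumState_apply, coe_prod_reducedRep_vacuumTensor hφ hl, algebraMapInv_wordTensor hne]

theorem reducedRep_injective {i : I} (hφ : φ i 1 = 1) : Function.Injective (reducedRep hφ) := by
  intro a b hab
  apply splitTensor_injective φ i
  rw [← coe_reducedRep_vacuumTensor hφ, hab, coe_reducedRep_vacuumTensor hφ]

/-- The representation of the free product of the `A i` on the span of the reduced words. -/
noncomputable def freeProductRep (hφ : ∀ i, φ i 1 = 1) :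
    FreeProduct R A →ₐ[R] Module.End R (reducedTensors φ) :=
  LinearAlgebra.FreeProduct.lift R A fun {i} => reducedRep (hφ i)

theorem freeProductRep_ι (hφ : ∀ i, φ i 1 = 1) (i : I) (a : A i) :
    freeProductRep hφ (LinearAlgebra.FreeProduct.ι R A i a) = reducedRep (hφ i) a :=
  DFunLike.congr_fun
    (LinearAlgebra.FreeProduct.lift_comp_ι R A (fun {i} => reducedRep (hφ i))) a

end FreeProductState

theorem freeIndepMoment_range_of_isReducedWord {I B : Type*} {A : I → Type*}
    [∀ i, Ring (A i)] [∀ i, Algebra ℂ (A i)] [Ring B] [Algebra ℂ B]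
    {φ : ∀ i, A i →ₗ[ℂ] ℂ} {ψ : B →ₗ[ℂ] ℂ} {f : ∀ i, A i →ₐ[ℂ] B}
    (hψ : ∀ i a, ψ (f i a) = φ i a)
    (hfree : ∀ l : List (Σ i, A i), l ≠ [] → IsReducedWord φ l →
      ψ (l.map fun p => f p.1 p.2).prod = 0) :
    FreeIndepMoment ψ fun i => Set.range (f i) := by
  intro k hk a idx ha hψa hidx
  choose x hx using ha
  have hred : IsReducedWord φ (List.ofFn fun j => (⟨idx j, x j⟩ : Σ i, A i)) := by
    refine ⟨List.forall_mem_ofFn_iff.2 fun j => ?_, List.isChain_iff_getElem.2 fun j hj => ?_⟩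
    · rw [← hψ, hx, hψa]
    · simpa only [List.getElem_ofFn] using hidx _ _ rfl
  have hne : List.ofFn (fun j => (⟨idx j, x j⟩ : Σ i, A i)) ≠ [] :=
    fun h => hk.ne' (List.ofFn_eq_nil_iff.1 h)
  simpa only [List.map_ofFn, Function.comp_def, hx] using hfree _ hne hred

theorem free_product_of_ncp_exists_general {R I : Type*} [CommRing R] [DecidableEq I]
    (A : I → Type*) [∀ i, Ring (A i)] [∀ i, Algebra R (A i)]
    (φ : ∀ i, A i →ₗ[R] R) (hφ : ∀ i, φ i 1 = 1) :
    ∃ ψ : LinearAlgebra.FreeProduct R A →ₗ[R] R,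
      ψ 1 = 1 ∧
      (∀ i, Function.Injective (LinearAlgebra.FreeProduct.ι R A i)) ∧
      (∀ i a, ψ (LinearAlgebra.FreeProduct.ι R A i a) = φ i a) ∧
      ∀ l : List (Σ i, A i), l ≠ [] → IsReducedWord φ l →
        ψ (l.map fun p => LinearAlgebra.FreeProduct.ι R A p.1 p.2).prod = 0 := by
  refine ⟨vacuumState φ ∘ₗ (freeProductRep hφ).toLinearMap, ?_, fun i => ?_, fun i a => ?_,
    fun l hne hl => ?_⟩
  · simp only [LinearMap.comp_apply, AlgHom.toLinearMap_apply, map_one, vacuumState_one]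
  · refine Function.Injective.of_comp (f := freeProductRep hφ) ?_
    simpa only [Function.comp_def, freeProductRep_ι] using reducedRep_injective (hφ i)
  · rw [LinearMap.comp_apply, AlgHom.toLinearMap_apply, freeProductRep_ι, vacuumState_reducedRep]
  · simp only [LinearMap.comp_apply, AlgHom.toLinearMap_apply, map_list_prod, List.map_map,
      Function.comp_def, freeProductRep_ι, vacuumState_prod_reducedRep hφ hne hl]

/-- **Free product of non-commutative probability spaces.**
Given a family of non-commutative probability spaces `(A i, φ i)`, there exists a
non-commutative probability space `(B, ψ)` together with injective unital ℂ-algebra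
homomorphisms `ι i : A i →ₐ[ℂ] B` such that `ψ ∘ ι i = φ i` for every `i`, and the
images `ι i '' (A i)` are freely independent in `(B, ψ)` in the moment sense. -/
theorem free_product_of_ncp_exists {I : Type u} (A : I → Type v)
    [∀ i, Ring (A i)] [∀ i, Algebra ℂ (A i)]
    (φ : ∀ i, A i →ₗ[ℂ] ℂ) (hφ : ∀ i, φ i 1 = 1) :
    ∃ (B : Type (max u v)) (_ : Ring B) (_ : Algebra ℂ B) (ψ : B →ₗ[ℂ] ℂ)
      (ι : ∀ i, A i →ₐ[ℂ] B),
      ψ 1 = 1 ∧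
      (∀ i, Function.Injective (ι i)) ∧
      (∀ i a, ψ (ι i a) = φ i a) ∧
      FreeIndepMoment ψ (fun i => Set.range (ι i)) := by
  classical
  obtain ⟨ψ, hone, hinj, hψ, hfree⟩ := free_product_of_ncp_exists_general A φ hφ
  exact ⟨_, inferInstance, inferInstance, ψ, LinearAlgebra.FreeProduct.ι ℂ A, hone, hinj, hψ,
    freeIndepMoment_range_of_isReducedWord hψ hfree⟩
end

section
/- Let (A_i, φ_i) for i in an index set I be a family of *-probability spaces. Then there exists a *-probability space (A, φ) together with injective unital *-algebra homomorphisms ι_i : A_i → A for each i ∈ I such that φ ∘ ι_i = φ_i for every i ∈ I, and the images ι_i(A_i), i ∈ I, are freely independent in (A, φ) in the moment sense. -/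
open scoped BigOperators ComplexOrder

/-!
The free product acts on a Fock space. Choose a basis of each `A i` that consists of `1` and of
elements centred for `φ i`; the words in the centred basis elements whose neighbours have different
indices are a basis of the Fock space. Splitting off a first letter from `A i` identifies the Fock
space with `A i ⊗ (words avoiding i)`, on which `A i` acts by left multiplication, and the state is
the coefficient of the empty word `Ω` in `x Ω`. Centred elements with changing indices only lengthen
words, hence freeness. The words carry the Gram matrix that multiplies the GNS inner products of
corresponding letters; it is positive semidefinite by the Schur product theorem, and the action is a
`*`-representation for it, so that the state of `star x * x` is `⟨x Ω, x Ω⟩ ≥ 0`.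
-/

namespace StarProb

open LinearMap Matrix
open LinearAlgebra (FreeProduct)

section FreeProductStar

variable {I R : Type*} [DecidableEq I] [CommSemiring R] {A : I → Type*} [∀ i, Semiring (A i)]
  [∀ i, Algebra R (A i)]

theorem freeProduct_lift_ι {B : Type*} [Semiring B] [Algebra R B] (f : ∀ i, A i →ₐ[R] B) (i : I)
    (a : A i) :
    FreeProduct.lift R A (fun {i} => f i) (FreeProduct.ι R A i a) = f i a :=
  DFunLike.congr_fun (FreeProduct.lift_comp_ι R A fun {i} => f i) a

theorem adjoin_iUnion_range_ι_eq_top :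
    Algebra.adjoin R (⋃ i, Set.range (FreeProduct.ι R A i)) = ⊤ := by
  set S := Algebra.adjoin R (⋃ i, Set.range (FreeProduct.ι R A i))
  let j (i : I) : A i →ₐ[R] S := (FreeProduct.ι R A i).codRestrict S fun a =>
    Algebra.subset_adjoin (Set.mem_iUnion.2 ⟨i, a, rfl⟩)
  have section_eq_id : S.val.comp (FreeProduct.lift R A fun {i} => j i) =
      AlgHom.id R (FreeProduct R A) := by
    apply (FreeProduct.lift R A).symm.injective
    funext i
    ext a
    exact congrArg Subtype.val (freeProduct_lift_ι j i a)
  refine eq_top_iff.2 fun x _ => ?_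
  rw [← AlgHom.id_apply (R := R) x, ← section_eq_id]
  exact Subtype.property _

@[elab_as_elim]
theorem freeProduct_induction {motive : FreeProduct R A → Prop}
    (algebraMap : ∀ r, motive (algebraMap R _ r))
    (ι : ∀ i a, motive (FreeProduct.ι R A i a))
    (add : ∀ x y, motive x → motive y → motive (x + y))
    (mul : ∀ x y, motive x → motive y → motive (x * y)) (x : FreeProduct R A) :
    motive x := by
  have hx : x ∈ Algebra.adjoin R (⋃ i, Set.range (FreeProduct.ι R A i)) :=
    adjoin_iUnion_range_ι_eq_top (R := R) (A := A) ▸ Algebra.mem_top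
  induction hx using Algebra.adjoin_induction with
  | mem x hx =>
    obtain ⟨i, a, rfl⟩ := Set.mem_iUnion.1 hx
    exact ι i a
  | algebraMap r => exact algebraMap r
  | add x y _ _ hx hy => exact add x y hx hy
  | mul x y _ _ hx hy => exact mul x y hx hy

variable [StarRing R] [∀ i, StarRing (A i)] [∀ i, StarModule R (A i)]

variable (R A) in
/-- The involution of the free product, as a ring homomorphism to the opposite ring. It is conjugate
linear, so it is obtained from the universal property for the `R`-algebra structure on the opposite
ring that is twisted by `star`. -/
noncomputable def freeProductStarHom : FreeProduct R A →+* (FreeProduct R A)ᵐᵒᵖ :=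
  letI : Algebra R (FreeProduct R A)ᵐᵒᵖ := Algebra.compHom _ (starRingEnd R)
  (FreeProduct.lift R A fun {i} =>
    { toRingHom := (RingHom.op (FreeProduct.ι R A i : A i →+* _)).comp
        (starRingEquiv : A i ≃+* (A i)ᵐᵒᵖ)
      commutes' := fun r => by
        simp [← algebraMap_star_comm, Algebra.compHom_algebraMap_apply, starRingEquiv,
          starRingEnd_apply] } : _ →ₐ[R] _).toRingHom

theorem freeProductStarHom_ι (i : I) (a : A i) :
    freeProductStarHom R A (FreeProduct.ι R A i a) =
      MulOpposite.op (FreeProduct.ι R A i (star a)) :=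
  letI : Algebra R (FreeProduct R A)ᵐᵒᵖ := Algebra.compHom _ (starRingEnd R)
  freeProduct_lift_ι _ i a

theorem freeProductStarHom_algebraMap (r : R) :
    freeProductStarHom R A (algebraMap R _ r) = MulOpposite.op (algebraMap R _ (star r)) :=
  letI : Algebra R (FreeProduct R A)ᵐᵒᵖ := Algebra.compHom _ (starRingEnd R)
  AlgHom.commutes _ r

/-- The involution of the free product that makes every `FreeProduct.ι R A i` star preserving. -/
noncomputable instance freeProductStarRing : StarRing (FreeProduct R A) where
  star x := (freeProductStarHom R A x).unop
  star_involutive x := by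
    induction x using freeProduct_induction with
    | algebraMap r => simp [freeProductStarHom_algebraMap]
    | ι i a => simp [freeProductStarHom_ι]
    | add x y hx hy => simp [hx, hy]
    | mul x y hx hy => simp [hx, hy]
  star_mul x y := by simp
  star_add x y := by simp

theorem star_ι (i : I) (a : A i) : star (FreeProduct.ι R A i a) = FreeProduct.ι R A i (star a) :=
  congrArg MulOpposite.unop (freeProductStarHom_ι i a)

theorem star_algebraMap (r : R) :
    star (algebraMap R (FreeProduct R A) r) = algebraMap R _ (star r) :=
  congrArg MulOpposite.unop (freeProductStarHom_algebraMap r)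

instance freeProductStarModule : StarModule R (FreeProduct R A) where
  star_smul r x := by
    rw [Algebra.smul_def, star_mul, star_algebraMap, ← Algebra.commutes, Algebra.smul_def]

variable (R A) in
/-- The inclusion of a factor into the free product, as a `*`-homomorphism. -/
noncomputable def freeProductStarι (i : I) : A i →⋆ₐ[R] FreeProduct R A where
  __ := FreeProduct.ι R A i
  map_star' a := (star_ι i a).symm

end FreeProductStar

section PointedBasis

theorem exists_basis_option_coord_eq.{u, v} {K : Type u} {V : Type v} [Field K]
    [AddCommGroup V] [Module K V] {φ : V →ₗ[K] K} {v : V} (hv : φ v = 1) :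
    ∃ (J : Type v) (b : Module.Basis (Option J) K V), b none = v ∧ b.coord none = φ := by
  let c := Module.Basis.ofVectorSpace K (ker φ)
  let f : Option (Module.Basis.ofVectorSpaceIndex K (ker φ)) → V := fun o =>
    o.casesOn' v fun k => c k
  have span_c : Submodule.span K (Set.range fun k => (c k : V)) = ker φ := by
    rw [Set.range_comp' Subtype.val c, ← Submodule.coe_subtype, Submodule.span_image, c.span_eq,
      Submodule.map_subtype_top]
  have hli : LinearIndependent K f :=
    linearIndependent_option'.2
      ⟨c.linearIndependent.map' (ker φ).subtype (ker φ).ker_subtype, by simp [span_c, hv]⟩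
  have hspan : ⊤ ≤ Submodule.span K (Set.range f) := fun x _ => by
    have hv' : v ∈ Submodule.span K (Set.range f) := Submodule.subset_span ⟨none, rfl⟩
    have hker : ker φ ≤ Submodule.span K (Set.range f) :=
      span_c.ge.trans (Submodule.span_mono (Set.range_subset_iff.2 fun k => ⟨some k, rfl⟩))
    have hx : x - φ x • v ∈ ker φ := by simp [hv]
    simpa using add_mem (hker hx) (Submodule.smul_mem _ (φ x) hv')
  let b := Module.Basis.mk hli hspan
  have b_apply (o) : b o = f o := Module.Basis.mk_apply hli hspan o
  refine ⟨_, b, b_apply none, b.ext fun o => ?_⟩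
  rw [Module.Basis.coord_apply, b.repr_self, b_apply]
  rcases o with _ | k
  · simp [f, hv]
  · simp [f]

end PointedBasis

section ReducedWord

variable {I : Type*} {J : I → Type*}

/-- The index of the first letter of a word, `none` for the empty word. -/
def headIndex (l : List (Σ i, J i)) : Option I := l.head?.map Sigma.fst

@[simp] theorem headIndex_nil : headIndex ([] : List (Σ i, J i)) = none := rfl

@[simp] theorem headIndex_cons (p : Σ i, J i) (l : List (Σ i, J i)) :
    headIndex (p :: l) = some p.1 := rfl

theorem isChain_cons_iff_headIndex_ne {p : Σ i, J i} {l : List (Σ i, J i)} :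
    (p :: l).IsChain (fun q r => q.1 ≠ r.1) ↔
      headIndex l ≠ some p.1 ∧ l.IsChain fun q r => q.1 ≠ r.1 := by
  cases l <;> simp [eq_comm]

variable (J) in
/-- The words in the letters `J i`, `i : I`, whose neighbouring letters have different indices. They
index the standard basis of the Fock space. -/
abbrev ReducedWord : Type _ := {l : List (Σ i, J i) // l.IsChain fun p q => p.1 ≠ q.1}

namespace ReducedWord

/-- The empty word. -/
def nil : ReducedWord J := ⟨[], .nil⟩

variable (J) in
/-- The reduced words that do not start with a letter from `J i`. -/
abbrev Avoiding (i : I) : Type _ := {w : ReducedWord J // headIndex w.1 ≠ some i}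

/-- The empty word, as a word that does not start with a letter from `J i`. -/
def Avoiding.nil (i : I) : Avoiding J i := ⟨ReducedWord.nil, nofun⟩

/-- Put an optional letter from `J i` in front of a word that does not start with such a letter. -/
def prepend (i : I) : Avoiding J i × Option (J i) → ReducedWord J
  | (w, none) => w.1
  | (w, some k) => ⟨⟨i, k⟩ :: w.1.1, isChain_cons_iff_headIndex_ne.2 ⟨w.2, w.1.2⟩⟩

@[simp] theorem prepend_none (i : I) (w : Avoiding J i) : prepend i (w, none) = w.1 := rfl

theorem prepend_injective (i : I) : Function.Injective (prepend i : _ → ReducedWord J) := by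
  rintro ⟨⟨⟨l, hl⟩, hli⟩, _ | k⟩ ⟨⟨⟨m, hm⟩, hmi⟩, _ | k'⟩ h <;>
    simp only [prepend, Subtype.mk.injEq] at h
  · simp [h]
  · simp [h] at hli
  · simp [← h] at hmi
  · simpa [and_comm] using h

theorem prepend_surjective (i : I) : Function.Surjective (prepend i : _ → ReducedWord J) := by
  intro w
  by_cases hw : headIndex w.1 = some i
  · obtain ⟨_ | ⟨⟨j, k⟩, l⟩, hl⟩ := w
    · simp at hw
    · obtain rfl : j = i := by simpa using hw
      obtain ⟨hne, hl⟩ := isChain_cons_iff_headIndex_ne.1 hl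
      exact ⟨(⟨⟨l, hl⟩, hne⟩, some k), rfl⟩
  · exact ⟨(⟨w, hw⟩, none), rfl⟩

/-- The unique decomposition of a reduced word into an optional first letter from `J i` and a word
that does not start with such a letter. -/
noncomputable def prependEquiv (i : I) : Avoiding J i × Option (J i) ≃ ReducedWord J :=
  Equiv.ofBijective (prepend i) ⟨prepend_injective i, prepend_surjective i⟩

end ReducedWord

end ReducedWord

open ReducedWord

section FockSpace

variable {I R : Type*} [CommSemiring R] {A : I → Type*} [∀ i, Semiring (A i)]
  [∀ i, Algebra R (A i)] {J : I → Type*} (b : ∀ i, Module.Basis (Option (J i)) R (A i))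

/-- The Fock space `ReducedWord J →₀ R` of the free product as `A i ⊗ (words avoiding i)`, encoded
as the `A i`-valued finitely supported functions. The unit `b i none` stands for the absence of a
first letter from `J i`. -/
noncomputable def splitEquiv (i : I) : (Avoiding J i →₀ A i) ≃ₗ[R] (ReducedWord J →₀ R) :=
  Finsupp.mapRange.linearEquiv (b i).repr ≪≫ₗ (Finsupp.curryLinearEquiv R).symm ≪≫ₗ
    Finsupp.domLCongr (prependEquiv i)

theorem splitEquiv_apply_prepend (i : I) (y : Avoiding J i →₀ A i) (w : Avoiding J i)
    (o : Option (J i)) : splitEquiv b i y (prepend i (w, o)) = (b i).repr (y w) o := by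
  have : (prependEquiv i).symm (prepend i (w, o)) = (w, o) := (prependEquiv i).symm_apply_apply _
  simp [splitEquiv, this]

theorem splitEquiv_single_basis (i : I) (w : Avoiding J i) (o : Option (J i)) :
    splitEquiv b i (Finsupp.single w (b i o)) = Finsupp.single (prepend i (w, o)) 1 := by
  simp only [splitEquiv, LinearEquiv.trans_apply, Finsupp.mapRange.linearEquiv_apply,
    Finsupp.mapRange_single, Module.Basis.repr_self, Finsupp.curryLinearEquiv_symm_apply,
    Finsupp.uncurry_single, Finsupp.domLCongr_apply, Finsupp.domCongr_apply,
    Finsupp.equivMapDomain_single]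
  rfl

/-- The representation of `A i` on the Fock space by left multiplication on the tensor factor `A i`
of `splitEquiv b i`. -/
noncomputable def letterRep (i : I) : A i →ₐ[R] Module.End R (ReducedWord J →₀ R) :=
  ((splitEquiv b i).conjAlgEquiv R : _ →ₐ[R] _).comp (Algebra.lsmul R R (Avoiding J i →₀ A i))

@[simp]
theorem letterRep_splitEquiv (i : I) (a : A i) (y : Avoiding J i →₀ A i) :
    letterRep b i a (splitEquiv b i y) = splitEquiv b i (a • y) := by
  simp [letterRep]

variable (R J) in
/-- The vacuum vector of the Fock space, which is the empty word. -/
noncomputable def vacuum : ReducedWord J →₀ R := Finsupp.single ReducedWord.nil 1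

variable {b}

theorem letterRep_vacuum {i : I} (hb : b i none = 1) (a : A i) :
    letterRep b i a (vacuum R J) = splitEquiv b i (Finsupp.single (Avoiding.nil i) a) := by
  have : vacuum R J = splitEquiv b i (Finsupp.single (Avoiding.nil i) (b i none)) :=
    (splitEquiv_single_basis b i (Avoiding.nil i) none).symm
  simp [this, hb]

theorem letterRep_vacuum_apply_nil {i : I} (hb : b i none = 1) (a : A i) :
    letterRep b i a (vacuum R J) ReducedWord.nil = (b i).coord none a := by
  rw [letterRep_vacuum hb]
  exact (splitEquiv_apply_prepend b i _ (Avoiding.nil i) none).trans (by simp)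

theorem letterRep_injective {i : I} (hb : b i none = 1) : Function.Injective (letterRep b i) := by
  intro a a' h
  have := DFunLike.congr_fun h (vacuum R J)
  rw [letterRep_vacuum hb, letterRep_vacuum hb] at this
  exact Finsupp.single_injective _ ((splitEquiv b i).injective this)

theorem letterRep_apply_eq_zero {i : I} (hb : b i none = 1) {a : A i} (ha : (b i).coord none a = 0)
    {x : ReducedWord J →₀ R} (hx : ∀ w : ReducedWord J, headIndex w.1 = some i → x w = 0)
    {w : ReducedWord J} (hw : headIndex w.1 ≠ some i) : letterRep b i a x w = 0 := by
  obtain ⟨y, rfl⟩ := (splitEquiv b i).surjective x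
  let w' : Avoiding J i := ⟨w, hw⟩
  have y_eq : y w' = (b i).repr (y w') none • 1 := by
    refine (b i).ext_elem fun o => ?_
    rcases o with _ | k
    · simp [← hb]
    · rw [← splitEquiv_apply_prepend, hx _ rfl]
      simp [← hb]
  calc letterRep b i a (splitEquiv b i y) w = (b i).coord none (a * y w') := by
        rw [letterRep_splitEquiv]
        exact splitEquiv_apply_prepend b i (a • y) w' none
    _ = (b i).repr (y w') none * (b i).coord none a := by
        rw [y_eq, mul_smul_one, map_smul, smul_eq_mul, ← y_eq]
    _ = 0 := by rw [ha, mul_zero]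

variable [DecidableEq I]

variable (b) in
/-- The representation of the free product on the Fock space. -/
noncomputable def fockRep : FreeProduct R A →ₐ[R] Module.End R (ReducedWord J →₀ R) :=
  FreeProduct.lift R A fun {i} => letterRep b i

@[simp]
theorem fockRep_ι (i : I) (a : A i) : fockRep b (FreeProduct.ι R A i a) = letterRep b i a :=
  freeProduct_lift_ι _ i a

theorem freeProduct_ι_injective {i : I} (hb : b i none = 1) :
    Function.Injective (FreeProduct.ι R A i) :=
  .of_comp (f := fockRep b) <| by simpa [Function.comp_def] using letterRep_injective hb

theorem fockRep_prod_vacuum_apply_eq_zero (hb : ∀ i, b i none = 1) {l : List (Σ i, A i)}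
    (hl : l.IsChain fun p q => p.1 ≠ q.1) (h0 : ∀ p ∈ l, (b p.1).coord none p.2 = 0)
    {w : ReducedWord J} (hw : headIndex w.1 ≠ headIndex l) :
    fockRep b (l.map fun p => FreeProduct.ι R A p.1 p.2).prod (vacuum R J) w = 0 := by
  induction l generalizing w with
  | nil =>
    have : ReducedWord.nil ≠ w := fun h => hw (h ▸ rfl)
    simp [vacuum, this]
  | cons p l ih =>
    obtain ⟨hp, hl⟩ := isChain_cons_iff_headIndex_ne.1 hl
    obtain ⟨hp0, hl0⟩ := List.forall_mem_cons.1 h0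
    rw [List.map_cons, List.prod_cons, map_mul, Module.End.mul_apply, fockRep_ι]
    exact letterRep_apply_eq_zero (hb _) hp0
      (fun v hv => ih hl hl0 fun h => hp (h.symm.trans hv)) hw

variable (b) in
/-- The free product functional `x ↦ ⟨Ω, x Ω⟩`. It is written without an inner product, as the
coefficient of the empty word in `x Ω`. -/
noncomputable def vacuumState : FreeProduct R A →ₗ[R] R :=
  Finsupp.lapply ReducedWord.nil ∘ₗ LinearMap.applyₗ (vacuum R J) ∘ₗ (fockRep b).toLinearMap

theorem vacuumState_apply (x : FreeProduct R A) :
    vacuumState b x = fockRep b x (vacuum R J) ReducedWord.nil := rfl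

variable (b) in
theorem vacuumState_one : vacuumState b 1 = 1 := by simp [vacuumState_apply, vacuum]

theorem vacuumState_ι {i : I} (hb : b i none = 1) (a : A i) :
    vacuumState b (FreeProduct.ι R A i a) = (b i).coord none a := by
  rw [vacuumState_apply, fockRep_ι, letterRep_vacuum_apply_nil hb]

theorem vacuumState_prod_eq_zero (hb : ∀ i, b i none = 1) {l : List (Σ i, A i)} (hne : l ≠ [])
    (hl : l.IsChain fun p q => p.1 ≠ q.1) (h0 : ∀ p ∈ l, (b p.1).coord none p.2 = 0) :
    vacuumState b (l.map fun p => FreeProduct.ι R A p.1 p.2).prod = 0 := by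
  refine fockRep_prod_vacuum_apply_eq_zero hb hl h0 ?_
  cases l with
  | nil => exact absurd rfl hne
  | cons p l => exact nofun

end FockSpace

section PosSemidef

theorem posSemidef_blockDiagonal' {ι R : Type*} {m : ι → Type*} [DecidableEq ι] [Ring R]
    [PartialOrder R] [AddLeftMono R] [StarRing R] {M : ∀ i, Matrix (m i) (m i) R}
    (hM : ∀ i, (M i).PosSemidef) : (blockDiagonal' M).PosSemidef := by
  refine ⟨(blockDiagonal'_conjTranspose M).trans (congrArg _ (funext fun i => (hM i).1)),
    fun x => ?_⟩
  rw [Finsupp.sigma_sum]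
  refine Finset.sum_nonneg fun i hi => ?_
  have row_sum (k : m i) (c : R) :
      (x.sum fun q d => star c * blockDiagonal' M ⟨i, k⟩ q * d) =
        (x.split i).sum fun k' d => star c * M i k k' * d := by
    rw [Finsupp.sigma_sum]
    refine (Finset.sum_eq_single_of_mem i hi fun j _ hj => ?_).trans ?_
    · simp [blockDiagonal'_apply_ne _ _ _ hj.symm]
    · simp [blockDiagonal'_apply_eq]
  simpa only [row_sum] using (hM i).2 (x.split i)

theorem posSemidef_of_one {R X : Type*} [Ring R] [PartialOrder R] [StarRing R] [StarOrderedRing R] :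
    (of fun _ _ => 1 : Matrix X X R).PosSemidef := by
  refine ⟨by ext; simp, fun x => ?_⟩
  have : (x.sum fun _ c => x.sum fun _ d => star c * 1 * d) =
      star (x.sum fun _ c => c) * x.sum fun _ d => d := by
    simp [Finsupp.sum, Finset.sum_mul_sum]
  simpa only [of_apply, this] using star_mul_self_nonneg _

theorem posSemidef_finset_prod {ι 𝕜 X : Type*} [RCLike 𝕜] {K : ι → Matrix X X 𝕜}
    (s : Finset ι) (hK : ∀ t ∈ s, (K t).PosSemidef) :
    (of fun p q => ∏ t ∈ s, K t p q : Matrix X X 𝕜).PosSemidef := by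
  classical
  induction s using Finset.induction_on with
  | empty => simpa using posSemidef_of_one
  | insert t s ht ih =>
    rw [Finset.forall_mem_insert] at hK
    simp only [Finset.prod_insert ht]
    exact hK.1.hadamard (ih hK.2)

end PosSemidef

section ListKernel

variable {R X : Type*} [CommMonoidWithZero R]

/-- The kernel of the full Fock space over a kernel `K` on letters: the product of the `K p q` over
corresponding letters of two words of equal length, and zero for words of different lengths. -/
def listKernel (K : Matrix X X R) : Matrix (List X) (List X) R
  | [], [] => 1
  | p :: l, q :: m => K p q * listKernel K l m
  | _, _ => 0

theorem listKernel_of_length_ne (K : Matrix X X R) {l m : List X} (h : l.length ≠ m.length) :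
    listKernel K l m = 0 := by
  induction l generalizing m with
  | nil => cases m <;> simp_all [listKernel]
  | cons p l ih => cases m <;> simp_all [listKernel]

theorem listKernel_ofFn (K : Matrix X X R) {n : ℕ} (f g : Fin n → X) :
    listKernel K (List.ofFn f) (List.ofFn g) = ∏ t, K (f t) (g t) := by
  induction n with
  | zero => simp [listKernel]
  | succ n ih => simp [listKernel, ih, Fin.prod_univ_succ]

theorem posSemidef_listKernel {𝕜 : Type*} [RCLike 𝕜] {K : Matrix X X 𝕜} (hK : K.PosSemidef) :
    (listKernel K).PosSemidef := by
  have blocks : (listKernel K).submatrix List.equivSigmaTuple.symm List.equivSigmaTuple.symm =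
      blockDiagonal' fun n => of fun f g : Fin n → X => ∏ t, K (f t) (g t) := by
    ext ⟨n, f⟩ ⟨n', g⟩
    by_cases h : n = n'
    · subst h
      simpa [List.equivSigmaTuple, blockDiagonal'_apply_eq] using listKernel_ofFn K f g
    · rw [blockDiagonal'_apply_ne _ _ _ h]
      exact listKernel_of_length_ne K (by simpa [List.equivSigmaTuple] using h)
  rw [← posSemidef_submatrix_equiv List.equivSigmaTuple.symm, blocks]
  exact posSemidef_blockDiagonal' fun n =>
    posSemidef_finset_prod _ fun t _ => hK.submatrix fun f : Fin n → X => f t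

end ListKernel

section Form

variable {R X : Type*} [CommSemiring R] [StarRing R]

/-- The sesquilinear form on `X →₀ R` whose Gram matrix on the standard basis is `K`. -/
noncomputable def kernelForm (K : Matrix X X R) : (X →₀ R) →ₗ⋆[R] (X →₀ R) →ₗ[R] R :=
  Finsupp.lsum R fun p =>
    (toSpanSingleton R _ (Finsupp.linearCombination R (K p))).comp (starLinearEquiv R).toLinearMap

theorem kernelForm_apply (K : Matrix X X R) (x y : X →₀ R) :
    kernelForm K x y = x.sum fun p c => y.sum fun q d => star c * K p q * d := by
  simp [kernelForm, Finsupp.linearCombination_apply, LinearMap.finsupp_sum_apply, Finsupp.mul_sum,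
    mul_assoc, mul_comm]

theorem kernelForm_single (K : Matrix X X R) (p q : X) (c d : R) :
    kernelForm K (Finsupp.single p c) (Finsupp.single q d) = star c * K p q * d := by
  simp [kernelForm_apply]

variable {A : Type*} [Semiring A] [Algebra R A] [StarRing A] [StarModule R A]

/-- The GNS form `(a, c) ↦ φ (star a * c)`, conjugate linear in the first variable. -/
noncomputable def gnsForm (φ : A →ₗ[R] R) : A →ₗ⋆[R] A →ₗ[R] R :=
  ((LinearMap.mul R A).compr₂ φ).comp (starLinearEquiv R).toLinearMap

theorem gnsForm_apply (φ : A →ₗ[R] R) (a b : A) : gnsForm φ a b = φ (star a * b) := rfl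

theorem gnsForm_mul_left (φ : A →ₗ[R] R) (a b c : A) :
    gnsForm φ (a * b) c = gnsForm φ b (star a * c) := by
  simp [gnsForm_apply, mul_assoc]

end Form

section SesquilinearForm

theorem isPosSemidef_of_isNonneg {V : Type*} [AddCommGroup V] [Module ℂ V]
    {B : V →ₗ⋆[ℂ] V →ₗ[ℂ] ℂ} (hB : B.IsNonneg) : B.IsPosSemidef where
  __ := hB
  eq x y := by
    have im_self (z : V) : (B z z).im = 0 := (Complex.nonneg_iff.1 (hB.nonneg z)).2.symm
    have im_add : (B x y).im + (B y x).im = 0 := by simpa [im_self] using im_self (x + y)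
    have re_sub : (B x y).re + -(B y x).re = 0 := by
      simpa [im_self] using im_self (x + Complex.I • y)
    apply Complex.ext
    · rw [Complex.conj_re]
      linarith
    · rw [Complex.conj_im]
      linarith

theorem posSemidef_gram {R V X : Type*} [CommRing R] [PartialOrder R] [StarRing R]
    [AddCommGroup V] [Module R V] {B : V →ₗ⋆[R] V →ₗ[R] R} (hB : B.IsPosSemidef) (f : X → V) :
    (of fun p q => B (f p) (f q)).PosSemidef := by
  refine ⟨Matrix.ext fun p q => hB.eq _ _, fun x => ?_⟩
  have : (x.sum fun p c => x.sum fun q d => star c * B (f p) (f q) * d) =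
      B (Finsupp.linearCombination R f x) (Finsupp.linearCombination R f x) := by
    simp only [Finsupp.linearCombination_apply, Finsupp.sum, map_sum, LinearMap.sum_apply,
      map_smulₛₗ, LinearMap.smul_apply, smul_eq_mul, starRingEnd_apply, RingHom.id_apply,
      Finset.mul_sum]
    rw [Finset.sum_comm]
    simp only [mul_comm, mul_left_comm]
  simpa only [of_apply, this] using hB.nonneg _

end SesquilinearForm

section FockForm

variable {I R : Type*} [DecidableEq I] [CommSemiring R] [StarRing R] {A : I → Type*}
  [∀ i, Semiring (A i)] [∀ i, Algebra R (A i)] [∀ i, StarRing (A i)] [∀ i, StarModule R (A i)]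
  {J : I → Type*} (b : ∀ i, Module.Basis (Option (J i)) R (A i))

/-- The Gram matrix of the letters from `J i` for the GNS form of `(b i).coord none`. -/
noncomputable def letterKernel (i : I) : Matrix (J i) (J i) R :=
  of fun k k' => gnsForm ((b i).coord none) (b i (some k)) (b i (some k'))

/-- The Gram matrix of the reduced words: letters with different indices are orthogonal, and the
inner product of words of equal length is the product over their letters. -/
noncomputable def fockKernel : Matrix (ReducedWord J) (ReducedWord J) R :=
  (listKernel (blockDiagonal' (letterKernel b))).submatrix Subtype.val Subtype.val

/-- The sesquilinear form on the Fock space with Gram matrix `fockKernel b`. -/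
noncomputable def fockForm : (ReducedWord J →₀ R) →ₗ⋆[R] (ReducedWord J →₀ R) →ₗ[R] R :=
  kernelForm (fockKernel b)

variable {b}

theorem fockKernel_eq_zero {w w' : ReducedWord J} (h : headIndex w.1 ≠ headIndex w'.1) :
    fockKernel b w w' = 0 := by
  obtain ⟨_ | ⟨p, l⟩, _⟩ := w <;> obtain ⟨_ | ⟨q, m⟩, _⟩ := w'
  · exact absurd rfl h
  · rfl
  · rfl
  · have hpq : p.1 ≠ q.1 := fun hpq => h (congrArg some hpq)
    simp [fockKernel, listKernel, blockDiagonal'_apply, hpq]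

theorem fockKernel_prepend {i : I} (hb : b i none = 1)
    (hsymm : (gnsForm ((b i).coord none)).IsSymm) (w w' : Avoiding J i) (o o' : Option (J i)) :
    fockKernel b (prepend i (w, o)) (prepend i (w', o')) =
      gnsForm ((b i).coord none) (b i o) (b i o') * fockKernel b w.1 w'.1 := by
  have gns_none (o : Option (J i)) :
      gnsForm ((b i).coord none) (b i none) (b i o) = Finsupp.single o 1 none := by
    rw [gnsForm_apply, hb, star_one, one_mul, Module.Basis.coord_apply, Module.Basis.repr_self]
  rcases o with _ | k <;> rcases o' with _ | k'
  · simp [prepend, gns_none]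
  · have : fockKernel b w.1 (prepend i (w', some k')) = 0 := fockKernel_eq_zero w.2
    simpa [gns_none] using this
  · have : fockKernel b (prepend i (w, some k)) w'.1 = 0 := fockKernel_eq_zero w'.2.symm
    simpa [hsymm.eq_iff.1 ((gns_none (some k)).trans (by simp))] using this
  · simp [prepend, fockKernel, listKernel, letterKernel]

theorem fockForm_splitEquiv_single {i : I} (hb : b i none = 1)
    (hsymm : (gnsForm ((b i).coord none)).IsSymm) (w w' : Avoiding J i) (c c' : A i) :
    fockForm b (splitEquiv b i (Finsupp.single w c)) (splitEquiv b i (Finsupp.single w' c')) =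
      fockKernel b w.1 w'.1 * gnsForm ((b i).coord none) c c' := by
  let embed (w : Avoiding J i) : A i →ₗ[R] (ReducedWord J →₀ R) :=
    (splitEquiv b i).toLinearMap ∘ₗ Finsupp.lsingle w
  have : ((fockForm b).comp (embed w)).compl₂ (embed w') =
      fockKernel b w.1 w'.1 • gnsForm ((b i).coord none) := by
    refine LinearMap.ext_basis (b i) (b i) fun o o' => ?_
    simp [embed, splitEquiv_single_basis, fockForm, kernelForm_single,
      fockKernel_prepend hb hsymm, mul_comm]
  exact LinearMap.congr_fun₂ this c c'

theorem fockForm_letterRep_left {i : I} (hb : b i none = 1)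
    (hsymm : (gnsForm ((b i).coord none)).IsSymm) (a : A i) (x y : ReducedWord J →₀ R) :
    fockForm b (letterRep b i a x) y = fockForm b x (letterRep b i (star a) y) := by
  obtain ⟨x, rfl⟩ := (splitEquiv b i).surjective x
  obtain ⟨y, rfl⟩ := (splitEquiv b i).surjective y
  induction x using Finsupp.induction_linear with
  | zero => simp
  | add x x' hx hx' => simp_all
  | single w c =>
    induction y using Finsupp.induction_linear with
    | zero => simp
    | add y y' hy hy' => simp_all
    | single w' c' =>
      rw [letterRep_splitEquiv, letterRep_splitEquiv, Finsupp.smul_single, Finsupp.smul_single,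
        fockForm_splitEquiv_single hb hsymm, fockForm_splitEquiv_single hb hsymm, smul_eq_mul,
        smul_eq_mul, gnsForm_mul_left]

theorem fockForm_fockRep_left (hb : ∀ i, b i none = 1)
    (hsymm : ∀ i, (gnsForm ((b i).coord none)).IsSymm) (a : FreeProduct R A)
    (x y : ReducedWord J →₀ R) :
    fockForm b (fockRep b a x) y = fockForm b x (fockRep b (star a) y) := by
  induction a using freeProduct_induction generalizing x y with
  | algebraMap r => simp [← algebraMap_star_comm, starRingEnd_apply]
  | ι i a => simpa [star_ι] using fockForm_letterRep_left (hb i) (hsymm i) a x y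
  | add a a' ha ha' => simp [ha, ha']
  | mul a a' ha ha' => simp [ha, ha']

theorem fockForm_vacuum_left (y : ReducedWord J →₀ R) :
    fockForm b (vacuum R J) y = y ReducedWord.nil := by
  have : fockForm b (vacuum R J) = Finsupp.lapply ReducedWord.nil := by
    ext ⟨l, hl⟩
    cases l <;> simp [vacuum, fockForm, kernelForm_single, fockKernel, listKernel,
      ReducedWord.nil]
  exact LinearMap.congr_fun this y

theorem vacuumState_star_mul_self (hb : ∀ i, b i none = 1)
    (hsymm : ∀ i, (gnsForm ((b i).coord none)).IsSymm) (a : FreeProduct R A) :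
    vacuumState b (star a * a) =
      fockForm b (fockRep b a (vacuum R J)) (fockRep b a (vacuum R J)) := by
  rw [fockForm_fockRep_left hb hsymm, fockForm_vacuum_left, vacuumState_apply, map_mul,
    Module.End.mul_apply]

end FockForm

section Positivity

variable {I : Type*} [DecidableEq I] {A : I → Type*} [∀ i, Ring (A i)] [∀ i, Algebra ℂ (A i)]
  [∀ i, StarRing (A i)] [∀ i, StarModule ℂ (A i)] {J : I → Type*}
  {b : ∀ i, Module.Basis (Option (J i)) ℂ (A i)}

theorem posSemidef_fockKernel (hpos : ∀ i, (gnsForm ((b i).coord none)).IsPosSemidef) :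
    (fockKernel b).PosSemidef :=
  .submatrix (posSemidef_listKernel <| posSemidef_blockDiagonal' fun i =>
    posSemidef_gram (hpos i) fun k => b i (some k)) Subtype.val

theorem vacuumState_star_mul_self_nonneg (hb : ∀ i, b i none = 1)
    (hpos : ∀ i (a : A i), 0 ≤ (b i).coord none (star a * a)) (a : FreeProduct ℂ A) :
    0 ≤ vacuumState b (star a * a) := by
  have hgns (i) : (gnsForm ((b i).coord none)).IsPosSemidef :=
    isPosSemidef_of_isNonneg ⟨hpos i⟩
  rw [vacuumState_star_mul_self hb fun i => (hgns i).isSymm, fockForm, kernelForm_apply]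
  exact (posSemidef_fockKernel hgns).2 _

end Positivity

section FreeIndepMoment

theorem freeIndepMoment_range_of_list {I B : Type*} {A : I → Type*} [Ring B] [Algebra ℂ B]
    {ψ : B →ₗ[ℂ] ℂ} (ι : ∀ i, A i → B)
    (h : ∀ l : List (Σ i, A i), l ≠ [] → l.IsChain (fun p q => p.1 ≠ q.1) →
      (∀ p ∈ l, ψ (ι p.1 p.2) = 0) → ψ (l.map fun p => ι p.1 p.2).prod = 0) :
    FreeIndepMoment ψ fun i => Set.range (ι i) := by
  intro k hk a idx ha ha0 hidx
  choose c hc using ha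
  obtain rfl : (fun t => ι (idx t) (c t)) = a := funext hc
  have := h (List.ofFn fun t => ⟨idx t, c t⟩) (by simpa using hk.ne')
    (List.isChain_ofFn.2 fun t ht => hidx _ _ rfl) (by simpa [List.forall_mem_ofFn_iff] using ha0)
  rwa [List.map_ofFn] at this

end FreeIndepMoment

end StarProb

/-- **Free product of `*`-probability spaces.**
Given a family of `*`-probability spaces `(A i, φ i)` (each `φ i` is a unital linear
functional that is positive: `φ i (star a * a)` is a nonnegative real for all `a`),
there exists a `*`-probability space `(B, ψ)` together with injective unital
`*`-algebra homomorphisms `ι i : A i →⋆ₐ[ℂ] B` such that `ψ ∘ ι i = φ i` for every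
`i`, and the images of the `A i` are freely independent in `(B, ψ)` in the moment
sense. -/
theorem free_product_of_star_prob_exists {I : Type u} (A : I → Type v)
    [∀ i, Ring (A i)] [∀ i, Algebra ℂ (A i)] [∀ i, StarRing (A i)]
    [∀ i, StarModule ℂ (A i)]
    (φ : ∀ i, A i →ₗ[ℂ] ℂ) (hφ : ∀ i, φ i 1 = 1)
    (hpos : ∀ i, ∀ a : A i, 0 ≤ φ i (star a * a)) :
    ∃ (B : Type (max u v)) (_ : Ring B) (_ : Algebra ℂ B) (_ : StarRing B)
      (_ : StarModule ℂ B) (ψ : B →ₗ[ℂ] ℂ)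
      (ι : ∀ i, A i →⋆ₐ[ℂ] B),
      ψ 1 = 1 ∧
      (∀ b : B, 0 ≤ ψ (star b * b)) ∧
      (∀ i, Function.Injective (ι i)) ∧
      (∀ i a, ψ (ι i a) = φ i a) ∧
      FreeIndepMoment ψ (fun i => Set.range (ι i)) := by
  classical
  choose J b hb hcoord using fun i => StarProb.exists_basis_option_coord_eq (hφ i)
  let _ : Ring (LinearAlgebra.FreeProduct ℂ A) := Algebra.semiringToRing ℂ
  refine ⟨LinearAlgebra.FreeProduct ℂ A, inferInstance, inferInstance, inferInstance,
    inferInstance, StarProb.vacuumState b, StarProb.freeProductStarι ℂ A,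
    StarProb.vacuumState_one b, ?_, ?_, ?_, ?_⟩
  · exact StarProb.vacuumState_star_mul_self_nonneg hb (by simpa only [hcoord] using hpos)
  · exact fun i => StarProb.freeProduct_ι_injective (hb i)
  · exact fun i a => (StarProb.vacuumState_ι (hb i) a).trans (by rw [hcoord])
  · refine StarProb.freeIndepMoment_range_of_list _ fun l hne hl h0 => ?_
    exact StarProb.vacuumState_prod_eq_zero hb hne hl fun p hp =>
      (StarProb.vacuumState_ι (hb _) _).symm.trans (h0 p hp)
end

section
/- Let (A, φ) be a non-commutative probability space with free cumulants (κ_n), and let (A_i)_{i∈I} be unital subalgebras of A. Then the following are equivalent: (a) for all n ≥ 2 and all a_1, …, a_n with each a_j ∈ A_{i(j)} for some i(j) ∈ I such that at least two of the indices i(j) differ, κ_n(a_1, …, a_n) = 0; (b) the subalgebras (A_i)_{i∈I} are freely independent in the moment sense. -/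
open scoped BigOperators ComplexOrder

/-- A partition of `{0, …, n-1}` is non-crossing if whenever `p < q < r < s`,
`p, r` lie in a block `B` and `q, s` lie in a block `C`, then `B = C`. -/
def IsNonCrossing {n : ℕ} (π : Finpartition (Finset.univ : Finset (Fin n))) : Prop :=
  ∀ (p q r s : Fin n), p < q → q < r → r < s →
    ∀ B ∈ π.parts, ∀ C ∈ π.parts, p ∈ B → r ∈ B → q ∈ C → s ∈ C → B = C

/-- The multiplicative extension `κ_π[a_1, …, a_n] = ∏_{V ∈ π} κ_{|V|}(a_{i_1}, …, a_{i_s})`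
of a family of multilinear functionals `κ_n : A^n → ℂ`, where each block
`V = {i_1 < ⋯ < i_s}` is listed in increasing order. -/
noncomputable def partCum {A : Type*} [Ring A] [Algebra ℂ A]
    (κ : ∀ n, MultilinearMap ℂ (fun _ : Fin n => A) ℂ)
    {n : ℕ} (π : Finpartition (Finset.univ : Finset (Fin n))) (a : Fin n → A) : ℂ :=
  ∏ V ∈ π.parts, κ (V.sort (· ≤ ·)).length (fun j => a ((V.sort (· ≤ ·)).get j))

open Classical in
/-- The moment–cumulant relation: `φ(a_1 ⋯ a_n) = Σ_{π ∈ NC(n)} κ_π[a_1, …, a_n]`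
for all `n ≥ 1`; it characterizes the free cumulants of `(A, φ)`. -/
def MomentCumulant {A : Type*} [Ring A] [Algebra ℂ A] (φ : A →ₗ[ℂ] ℂ)
    (κ : ∀ n, MultilinearMap ℂ (fun _ : Fin n => A) ℂ) : Prop :=
  ∀ (n : ℕ), 0 < n → ∀ a : Fin n → A,
    φ (List.ofFn a).prod =
      ∑ π ∈ Finset.univ.filter
          (fun π : Finpartition (Finset.univ : Finset (Fin n)) => IsNonCrossing π),
        partCum κ π a
/-- Free independence, in the cumulant sense, of a family of subsets `S i` of `A`:
all mixed free cumulants vanish. -/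
def FreeIndepCumulant {A : Type*} [Ring A] [Algebra ℂ A] {ι : Type*}
    (S : ι → Set A)
    (κ : ∀ n, MultilinearMap ℂ (fun _ : Fin n => A) ℂ) : Prop :=
  ∀ (n : ℕ), 2 ≤ n → ∀ (a : Fin n → A) (idx : Fin n → ι),
    (∀ j, a j ∈ S (idx j)) → (∃ j j' : Fin n, idx j ≠ idx j') →
    κ n a = 0

/-!
Write a product of letters as a sum over non-crossing partitions and merge two neighbouring letters
`a_s`, `a_t` into the single letter `a_s a_t`. Comparing the two expansions gives Krawczyk and
Speicher's product formula: the cumulant of the merged word is the cumulant of the original word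
plus the products `κ(B) κ(Bᶜ)` over the non-crossing partitions `{B, Bᶜ}` separating `s` from `t`.

A non-crossing partition always has a singleton block or a block containing two neighbouring points.
Hence, for a centered word whose neighbouring letters come from different algebras, as soon as the
mixed cumulants of smaller orders vanish, only the one-block partition contributes to the moment:
`φ(a_1 ⋯ a_n) = κ_n(a_1, …, a_n)`. This gives (a) ⇒ (b), and in the converse direction the vanishing
of alternating cumulants by induction on `n`, because cumulants of order at least two are unchanged
by centering. If instead two neighbouring letters of a mixed word come from the same algebra, merge
them: the merged word is mixed and shorter, every product in the product formula has a mixed factor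
of smaller order, and so the cumulant of the original word vanishes.
-/

section NonCrossingSums

variable {α : Type*} [LinearOrder α] {R : Type*}

/-- Two disjoint finite sets do not cross: no pair `u, v` of elements of `B` separates two elements
`c, d` of `C`. The equivalence `u < c ↔ v < c` says that `c` is not strictly between `u` and `v`;
for sets that are not disjoint the definition carries no meaning. -/
def Uncrossed (B C : Finset α) : Prop :=
  ∀ u ∈ B, ∀ v ∈ B, ∀ c ∈ C, ∀ d ∈ C, ((u < c ↔ v < c) ↔ (u < d ↔ v < d))

theorem uncrossed_singleton_left (s : α) (C : Finset α) : Uncrossed {s} C := by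
  simp [Uncrossed]

theorem uncrossed_iff_not_crossing {B C : Finset α} (hBC : Disjoint B C) :
    Uncrossed B C ↔
      (∀ p ∈ B, ∀ q ∈ C, ∀ r ∈ B, ∀ s ∈ C, p < q → q < r → ¬ r < s) ∧
        ∀ p ∈ C, ∀ q ∈ B, ∀ r ∈ C, ∀ s ∈ B, p < q → q < r → ¬ r < s := by
  refine ⟨fun h => ⟨fun p hp q hq r hr s hs => ?_, fun p hp q hq r hr s hs => ?_⟩,
    fun h u hu v hv c hc d hd => ?_⟩
  · have := h p hp r hr q hq s hs
    clear h
    grind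
  · have := h q hq s hs p hp r hr
    clear h
    grind
  · wlog huv : u ≤ v generalizing u v
    · have := this v hv u hu (le_of_not_ge huv)
      tauto
    wlog hcd : c ≤ d generalizing c d
    · have := this d hd c hc (le_of_not_ge hcd)
      tauto
    have hne := Finset.disjoint_iff_ne.mp hBC
    have huc := (hne u hu c hc).lt_or_gt
    have hvd := (hne v hv d hd).lt_or_gt
    have hvc := (hne v hv c hc).lt_or_gt
    have hucvd := h.1 u hu c hc v hv d hd
    have hcudv := h.2 c hc u hu d hd v hv
    clear h hne
    grind

theorem Uncrossed.symm {B C : Finset α} (hBC : Disjoint B C) (h : Uncrossed B C) :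
    Uncrossed C B :=
  (uncrossed_iff_not_crossing hBC.symm).mpr ((uncrossed_iff_not_crossing hBC).mp h).symm

theorem uncrossed_union_iff {B C D : Finset α} {s t : α} (hs : s ∈ B) (ht : t ∈ C)
    (hst : ∀ d ∈ D, (s < d ↔ t < d)) :
    Uncrossed (B ∪ C) D ↔ Uncrossed B D ∧ Uncrossed C D := by
  refine ⟨fun h => ⟨fun u hu v hv => h u (by simp [hu]) v (by simp [hv]),
    fun u hu v hv => h u (by simp [hu]) v (by simp [hv])⟩, ?_⟩
  rintro ⟨hB, hC⟩ u hu v hv c hc d hd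
  have hsc := hst c hc
  have hsd := hst d hd
  rcases Finset.mem_union.mp hu with hu | hu <;> rcases Finset.mem_union.mp hv with hv | hv
  · exact hB u hu v hv c hc d hd
  · have hus := hB u hu s hs c hc d hd
    have htv := hC t ht v hv c hc d hd
    clear hB hC hst
    grind
  · have hsv := hB s hs v hv c hc d hd
    have hut := hC u hu t ht c hc d hd
    clear hB hC hst
    grind
  · exact hC u hu v hv c hc d hd

theorem uncrossed_map_iff {β : Type*} [LinearOrder β] (e : α ↪o β) {B C : Finset α} :
    Uncrossed (B.map e.toEmbedding) (C.map e.toEmbedding) ↔ Uncrossed B C := by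
  simp [Uncrossed]

theorem isNonCrossing_iff {n : ℕ} (π : Finpartition (Finset.univ : Finset (Fin n))) :
    IsNonCrossing π ↔ (π.parts : Set (Finset (Fin n))).Pairwise Uncrossed := by
  constructor
  · intro h B hB C hC hBC
    exact (uncrossed_iff_not_crossing (π.disjoint hB hC hBC)).mpr
      ⟨fun p hp q hq r hr s hs hpq hqr hrs => hBC (h p q r s hpq hqr hrs B hB C hC hp hr hq hs),
      fun p hp q hq r hr s hs hpq hqr hrs => hBC (h p q r s hpq hqr hrs C hC B hB hp hr hq hs).symm⟩
  · intro h p q r s hpq hqr hrs B hB C hC hp hr hq hs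
    by_contra hBC
    exact ((uncrossed_iff_not_crossing (π.disjoint hB hC hBC)).mp (h hB hC hBC)).1
      p hp q hq r hr s hs hpq hqr hrs

open Classical in
/-- The sum `∑_{π ∈ NC(S)} ∏_{V ∈ π} f V` over the non-crossing partitions of a finite set. -/
noncomputable def ncSum [CommSemiring R] (f : Finset α → R) (S : Finset α) : R :=
  ∑ π : Finpartition S with (π.parts : Set (Finset α)).Pairwise Uncrossed, ∏ V ∈ π.parts, f V

theorem ncSum_empty [CommSemiring R] (f : Finset α → R) : ncSum f ∅ = 1 := by
  rw [ncSum, Finset.sum_filter, ← Finset.bot_eq_empty, Fintype.sum_unique,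
    Finpartition.parts_eq_empty_iff.mpr rfl]
  simp

theorem ncSum_congr [CommSemiring R] {f g : Finset α → R} {S : Finset α}
    (h : ∀ V ⊆ S, V.Nonempty → f V = g V) : ncSum f S = ncSum g S :=
  Finset.sum_congr rfl fun π _ => Finset.prod_congr rfl fun _ hV =>
    h _ (π.subset hV) (π.nonempty_of_mem_parts hV)

open Classical in
theorem ncSum_indicator [CommSemiring R] (p : Finset α → Prop) (f : Finset α → R) (S : Finset α) :
    ncSum ({D | p D}.indicator f) S =
      ∑ π : Finpartition S with (π.parts : Set (Finset α)).Pairwise Uncrossed ∧ ∀ D ∈ π.parts, p D,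
        ∏ V ∈ π.parts, f V := by
  simp only [ncSum, Set.indicator_apply, Set.mem_ofPred_eq, Finset.prod_ite_zero,
    ← Finset.sum_filter, Finset.filter_filter]

theorem parts_avoid_of_mem {β : Type*} [GeneralizedBooleanAlgebra β] [DecidableEq β] {a b : β}
    (π : Finpartition a) (hb : b ∈ π.parts) : (π.avoid b).parts = π.parts.erase b := by
  ext d
  rw [Finpartition.mem_avoid, Finset.mem_erase]
  constructor
  · rintro ⟨c, hc, hcb, rfl⟩
    have hne : c ≠ b := fun h => hcb h.le
    have hdisj : Disjoint c b := π.disjoint hc hb hne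
    rw [hdisj.sdiff_eq_left]
    exact ⟨hne, hc⟩
  · rintro ⟨hdb, hd⟩
    have hdisj : Disjoint d b := π.disjoint hd hb hdb
    exact ⟨d, hd, fun h => π.ne_bot hd (hdisj.eq_bot_of_le h), hdisj.sdiff_eq_left⟩

theorem pairwise_uncrossed_insert_iff {B T : Finset α} (ρ : Finpartition T) (hBT : Disjoint B T)
    (hB : B ∉ ρ.parts) :
    (insert B (ρ.parts : Set (Finset α))).Pairwise Uncrossed ↔
      (ρ.parts : Set (Finset α)).Pairwise Uncrossed ∧ ∀ D ∈ ρ.parts, Uncrossed B D := by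
  rw [Set.pairwise_insert_of_notMem (mod_cast hB)]
  refine and_congr_right fun _ => forall₂_congr fun D hD => and_iff_left_of_imp fun h => h.symm ?_
  exact hBT.mono_right (ρ.subset hD)

theorem ncSum_eq_sum_block [CommSemiring R] (f : Finset α → R) {S : Finset α} {s : α} (hs : s ∈ S) :
    ncSum f S =
      ∑ B ∈ S.powerset with s ∈ B, f B * ncSum ({D | Uncrossed B D}.indicator f) (S \ B) := by
  classical
  rw [ncSum, ← Finset.sum_fiberwise_of_maps_to (g := fun π => π.part s)
    (t := S.powerset.filter (s ∈ ·)) (by simp [hs])]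
  refine Finset.sum_congr rfl fun B hB => ?_
  obtain ⟨hBS, hsB⟩ : B ⊆ S ∧ s ∈ B := by simpa using hB
  have hB0 : B ≠ ⊥ := Finset.ne_empty_of_mem hsB
  have notMem_parts (ρ : Finpartition (S \ B)) : B ∉ ρ.parts := fun h =>
    (Finset.mem_sdiff.mp (ρ.subset h hsB)).2 hsB
  have pairwise_iff (ρ : Finpartition (S \ B)) :=
    pairwise_uncrossed_insert_iff ρ Finset.disjoint_sdiff (notMem_parts ρ)
  have insert_avoid {π : Finpartition S} (hπ : π.part s = B) :
      insert B (π.avoid B).parts = π.parts := by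
    have hBπ : B ∈ π.parts := hπ ▸ π.part_mem.mpr hs
    rw [parts_avoid_of_mem π hBπ, Finset.insert_erase hBπ]
  rw [ncSum_indicator, Finset.mul_sum]
  refine Finset.sum_bij' (fun π _ => π.avoid B)
    (fun ρ _ => ρ.extend hB0 Finset.sdiff_disjoint (Finset.sdiff_union_of_subset hBS))
    ?_ ?_ ?_ ?_ ?_
  all_goals simp only [Finset.mem_filter, Finset.mem_univ, true_and]
  · rintro π ⟨hπ, hπB⟩
    rwa [← pairwise_iff, ← Finset.coe_insert, insert_avoid hπB]
  · intro ρ hρ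
    refine ⟨?_, Finpartition.part_eq_of_mem _ (Finset.mem_insert_self _ _) hsB⟩
    simpa [← pairwise_iff] using hρ
  · rintro π ⟨-, hπB⟩
    exact Finpartition.ext (insert_avoid hπB)
  · intro ρ _
    ext1
    rw [parts_avoid_of_mem _ (Finset.mem_insert_self _ _)]
    exact Finset.erase_insert (notMem_parts ρ)
  · rintro π ⟨-, hπB⟩
    rw [← insert_avoid hπB, Finset.prod_insert (notMem_parts _)]

theorem ncSum_map {β : Type*} [LinearOrder β] [CommSemiring R] (e : α ↪o β) (f : Finset β → R)
    (S : Finset α) :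
    ncSum f (S.map e.toEmbedding) = ncSum (fun V => f (V.map e.toEmbedding)) S := by
  classical
  induction S using Finset.strongInduction generalizing f with
  | H S ih =>
    obtain rfl | ⟨s, hs⟩ := S.eq_empty_or_nonempty
    · simp only [Finset.map_empty, ncSum_empty]
    rw [ncSum_eq_sum_block _ hs, ncSum_eq_sum_block f (Finset.mem_map_of_mem _ hs)]
    symm
    refine Finset.sum_bij (fun B _ => B.map e.toEmbedding) ?_
      (fun _ _ _ _ h => Finset.map_injective _ h) ?_ ?_
    · simp +contextual
    · intro C hC
      obtain ⟨hCS, hsC⟩ := Finset.mem_filter.mp hC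
      obtain ⟨B, hBS, rfl⟩ := Finset.subset_map_iff.mp (Finset.mem_powerset.mp hCS)
      exact ⟨B, by simpa [hBS] using hsC, rfl⟩
    · intro B hB
      obtain ⟨hBS, hsB⟩ : B ⊆ S ∧ s ∈ B := by simpa using hB
      rw [← Finset.map_sdiff, ih _ (Finset.sdiff_ssubset hBS ⟨s, hsB⟩)]
      congr 2 with V
      simp only [Set.indicator_apply, Set.mem_ofPred_eq, uncrossed_map_iff]

/-- `t` is the immediate successor of `s` among the elements of `S`. -/
structure IsSuccIn (S : Finset α) (s t : α) : Prop where
  left_mem : s ∈ S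
  right_mem : t ∈ S
  lt : s < t
  le_of_lt : ∀ x ∈ S, s < x → t ≤ x

theorem IsSuccIn.of_subset {S U : Finset α} {s t : α} (h : IsSuccIn S s t) (hU : U ⊆ S)
    (hs : s ∈ U) (ht : t ∈ U) : IsSuccIn U s t :=
  ⟨hs, ht, h.lt, fun x hx => h.le_of_lt x (hU hx)⟩

theorem exists_block_eq_singleton_or_isSuccIn {S : Finset α} (hS : S.Nonempty) (π : Finpartition S)
    (hπ : (π.parts : Set (Finset α)).Pairwise Uncrossed) :
    ∃ V ∈ π.parts, (∃ s, V = {s}) ∨ ∃ s t, IsSuccIn S s t ∧ s ∈ V ∧ t ∈ V := by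
  -- Let `t` be the least point that is not the minimum of its block, and `s` its predecessor in
  -- that block. A point strictly between them would have its whole block nested there, and that
  -- block would contain a smaller such `t`.
  by_contra! h
  have exists_ne {x : α} {V : Finset α} (hV : V ∈ π.parts) (hx : x ∈ V) : ∃ y ∈ V, y ≠ x := by
    by_contra! hy
    exact (h V hV).1 x (Finset.eq_singleton_iff_unique_mem.mpr ⟨hx, hy⟩)
  have hT : {t ∈ S | ∃ s ∈ π.part t, s < t}.Nonempty := by
    obtain ⟨x, hx⟩ := hS
    obtain ⟨V, hV, hxV⟩ := π.exists_mem hx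
    obtain ⟨y, hyV, hyx⟩ := exists_ne hV hxV
    obtain hyx | hxy := hyx.lt_or_gt
    · exact ⟨x, Finset.mem_filter.mpr ⟨hx, y, (π.part_eq_of_mem hV hxV).symm ▸ hyV, hyx⟩⟩
    · exact ⟨y, Finset.mem_filter.mpr
        ⟨π.subset hV hyV, x, (π.part_eq_of_mem hV hyV).symm ▸ hxV, hxy⟩⟩
  obtain ⟨t, ht, ht_min⟩ := Finset.exists_min_image _ id hT
  obtain ⟨htS, hP⟩ := Finset.mem_filter.mp ht
  obtain ⟨s, hs, hs_max⟩ := Finset.exists_max_image {s ∈ π.part t | s < t} id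
    (hP.imp fun s hs => Finset.mem_filter.mpr hs)
  obtain ⟨hsV, hst⟩ := Finset.mem_filter.mp hs
  have hV : π.part t ∈ π.parts := π.part_mem.mpr htS
  refine (h _ hV).2 s t ⟨π.subset hV hsV, htS, hst, fun x hxS hsx => ?_⟩ hsV (π.mem_part htS)
  by_contra! hxt
  obtain ⟨W, hW, hxW⟩ := π.exists_mem hxS
  have hxV : x ∉ π.part t := fun hxV =>
    (hs_max x (Finset.mem_filter.mpr ⟨hxV, hxt⟩)).not_gt hsx
  obtain ⟨y, hyW, hyx⟩ := exists_ne hW hxW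
  have hunc := hπ hV hW (fun e => hxV (e ▸ hxW)) s hsV t (π.mem_part htS) x hxW y hyW
  have hyt : y < t := by
    by_contra! hty
    have hne : t ≠ y := fun e => hxV (π.part_eq_of_mem hW (e ▸ hyW) ▸ hxW)
    exact absurd (hunc.mpr (iff_of_true (hst.trans_le hty) (hty.lt_of_ne hne)))
      (fun hiff => (hiff.mp hsx).not_gt hxt)
  obtain hyx | hxy := hyx.lt_or_gt
  · exact (ht_min x (Finset.mem_filter.mpr
      ⟨hxS, y, (π.part_eq_of_mem hW hxW).symm ▸ hyW, hyx⟩)).not_gt hxt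
  · exact (ht_min y (Finset.mem_filter.mpr
      ⟨π.subset hW hyW, x, (π.part_eq_of_mem hW hyW).symm ▸ hxW, hxy⟩)).not_gt hyt

theorem ncSum_eq_self [CommSemiring R] {f : Finset α → R} {S : Finset α} (hS : S.Nonempty)
    (hsingle : ∀ s ∈ S, f {s} = 0)
    (hsucc : ∀ V ⊂ S, ∀ s t, IsSuccIn S s t → s ∈ V → t ∈ V → f V = 0) :
    ncSum f S = f S := by
  classical
  rw [ncSum, Finset.sum_eq_single (Finpartition.indiscrete hS.ne_empty),
    Finpartition.indiscrete_parts, Finset.prod_singleton]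
  · intro π hπ hne
    obtain ⟨V, hV, hs⟩ := exists_block_eq_singleton_or_isSuccIn hS π (Finset.mem_filter.mp hπ).2
    refine Finset.prod_eq_zero hV ?_
    obtain ⟨s, rfl⟩ | ⟨s, t, hst, hsV, htV⟩ := hs
    · exact hsingle s (π.subset hV (Finset.mem_singleton_self s))
    · refine hsucc V ((π.subset hV).ssubset_of_ne ?_) s t hst hsV htV
      rintro rfl
      refine hne (Finpartition.ext (Finset.eq_singleton_iff_unique_mem.mpr ⟨hV, fun D hD => ?_⟩))
      obtain ⟨x, hx⟩ := π.nonempty_of_mem_parts hD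
      exact π.eq_of_mem_parts hD hV hx (π.subset hD hx)
  · simp

theorem sum_powerset_powerset_sdiff [AddCommMonoid R] (F : Finset α → Finset α → R)
    (S : Finset α) :
    ∑ B ∈ S.powerset, ∑ C ∈ (S \ B).powerset, F B C =
      ∑ U ∈ S.powerset, ∑ B ∈ U.powerset, F B (U \ B) := by
  rw [Finset.sum_sigma', Finset.sum_sigma']
  refine Finset.sum_bij' (fun x _ => ⟨x.1 ∪ x.2, x.1⟩) (fun x _ => ⟨x.2, x.1 \ x.2⟩) ?_ ?_ ?_ ?_ ?_
  all_goals simp only [Finset.mem_sigma, Finset.mem_powerset, Finset.subset_sdiff]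
  · rintro ⟨B, C⟩ ⟨hB, hC, -⟩
    exact ⟨Finset.union_subset hB hC, Finset.subset_union_left⟩
  · rintro ⟨U, B⟩ ⟨hU, hB⟩
    exact ⟨hB.trans hU, Finset.sdiff_subset.trans hU, Finset.sdiff_disjoint⟩
  · rintro ⟨B, C⟩ ⟨-, -, hBC⟩
    simp [Finset.union_sdiff_cancel_left hBC.symm]
  · rintro ⟨U, B⟩ ⟨-, hB⟩
    simp [Finset.union_sdiff_of_subset hB]
  · rintro ⟨B, C⟩ ⟨-, -, hBC⟩
    simp [Finset.union_sdiff_cancel_left hBC.symm]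

open Classical in
/-- The sum of `∏ f V` over the non-crossing partitions of `U` all of whose blocks meet `{s, t}`:
the one-block partition, and the partitions into two blocks separating `s` from `t`. -/
noncomputable def splitSum [CommSemiring R] (f : Finset α → R) (s t : α) (U : Finset α) : R :=
  f U + ∑ B ∈ U.powerset with s ∈ B ∧ t ∉ B ∧ Uncrossed B (U \ B), f B * f (U \ B)

theorem IsSuccIn.lt_iff_lt {S : Finset α} {s t x : α} (h : IsSuccIn S s t) (hx : x ∈ S)
    (hxt : x ≠ t) : s < x ↔ t < x :=
  ⟨fun hsx => (h.le_of_lt x hx hsx).lt_of_ne hxt.symm, h.lt.trans⟩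

theorem IsSuccIn.uncrossed_union_iff {S B C D : Finset α} {s t : α} (h : IsSuccIn S s t)
    (hs : s ∈ B) (ht : t ∈ C) (hD : D ⊆ S) (htD : t ∉ D) :
    Uncrossed (B ∪ C) D ↔ Uncrossed B D ∧ Uncrossed C D :=
  _root_.uncrossed_union_iff hs ht fun _ hd => h.lt_iff_lt (hD hd) (ne_of_mem_of_not_mem hd htD)

open Classical in
theorem IsSuccIn.ncSum_indicator_union [CommSemiring R] {S B C : Finset α} {s t : α}
    (h : IsSuccIn S s t) (f : Finset α → R) (hs : s ∈ B) (ht : t ∈ C) :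
    ncSum ({D | Uncrossed C D}.indicator ({D | Uncrossed B D}.indicator f)) ((S \ B) \ C) =
      ncSum ({D | Uncrossed (B ∪ C) D}.indicator f) (S \ (B ∪ C)) := by
  rw [sdiff_sdiff_left, Finset.sup_eq_union, Set.indicator_indicator]
  refine ncSum_congr fun D hD _ => ?_
  have htD : t ∉ D := fun htD => (Finset.mem_sdiff.mp (hD htD)).2 (by simp [ht])
  simp only [Set.indicator_apply, Set.mem_inter_iff, Set.mem_ofPred_eq,
    h.uncrossed_union_iff hs ht (hD.trans Finset.sdiff_subset) htD, and_comm]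

open Classical in
theorem sum_two_blocks [CommSemiring R] (f : Finset α → R) {S : Finset α} {s t : α}
    (h : IsSuccIn S s t) :
    ∑ B ∈ S.powerset with s ∈ B ∧ t ∉ B,
        f B * ncSum ({D | Uncrossed B D}.indicator f) (S \ B) =
      ∑ U ∈ S.powerset with s ∈ U ∧ t ∈ U,
        (∑ B ∈ U.powerset with s ∈ B ∧ t ∉ B ∧ Uncrossed B (U \ B), f B * f (U \ B)) *
          ncSum ({D | Uncrossed U D}.indicator f) (S \ U) := by
  let F (B C : Finset α) : R := if s ∈ B ∧ t ∈ C ∧ Uncrossed B C then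
    f B * f C * ncSum ({D | Uncrossed (B ∪ C) D}.indicator f) (S \ (B ∪ C)) else 0
  calc
    _ = ∑ B ∈ S.powerset, ∑ C ∈ (S \ B).powerset, F B C := by
      rw [Finset.sum_filter]
      refine Finset.sum_congr rfl fun B _ => ?_
      split_ifs with hB
      · have htS : t ∈ S \ B := Finset.mem_sdiff.mpr ⟨h.right_mem, hB.2⟩
        rw [ncSum_eq_sum_block _ htS, Finset.mul_sum, Finset.sum_filter]
        refine Finset.sum_congr rfl fun C _ => ?_
        by_cases htC : t ∈ C
        · simp only [F, htC, hB.1, true_and, if_true, h.ncSum_indicator_union f hB.1 htC,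
            Set.indicator_apply, Set.mem_ofPred_eq]
          split_ifs <;> ring
        · simp [F, htC]
      · refine (Finset.sum_eq_zero fun C hC => if_neg fun hF => hB ⟨hF.1, fun htB => ?_⟩).symm
        exact (Finset.mem_sdiff.mp (Finset.mem_powerset.mp hC hF.2.1)).2 htB
    _ = ∑ U ∈ S.powerset, ∑ B ∈ U.powerset, F B (U \ B) := sum_powerset_powerset_sdiff F S
    _ = _ := by
      rw [Finset.sum_filter]
      refine Finset.sum_congr rfl fun U _ => ?_
      split_ifs with hU
      · rw [Finset.sum_mul, Finset.sum_filter]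
        refine Finset.sum_congr rfl fun B hB => ?_
        simp [F, hU.2, Finset.union_sdiff_of_subset (Finset.mem_powerset.mp hB)]
      · refine Finset.sum_eq_zero fun B hB => if_neg fun hF => hU ?_
        exact ⟨Finset.mem_powerset.mp hB hF.1, (Finset.mem_sdiff.mp hF.2.1).1⟩

open Classical in
theorem ncSum_eq_sum_splitSum [CommSemiring R] (f : Finset α → R) {S : Finset α} {s t : α}
    (h : IsSuccIn S s t) :
    ncSum f S = ∑ U ∈ S.powerset with s ∈ U ∧ t ∈ U,
      splitSum f s t U * ncSum ({D | Uncrossed U D}.indicator f) (S \ U) := by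
  rw [ncSum_eq_sum_block f h.left_mem, ← Finset.sum_filter_add_sum_filter_not _ (t ∈ ·),
    Finset.filter_filter, Finset.filter_filter, sum_two_blocks f h, ← Finset.sum_add_distrib]
  simp only [splitSum, add_mul]

open Classical in
theorem ncSum_erase_eq_sum [CommSemiring R] {f f' : Finset α → R} {S : Finset α} {s t : α}
    (h : IsSuccIn S s t) (hf : ∀ V ⊆ S, s ∉ V → t ∉ V → f' V = f V) :
    ncSum f' (S.erase t) = ∑ U ∈ S.powerset with s ∈ U ∧ t ∈ U,
      f' (U.erase t) * ncSum ({D | Uncrossed U D}.indicator f) (S \ U) := by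
  rw [ncSum_eq_sum_block f' (Finset.mem_erase.mpr ⟨h.lt.ne, h.left_mem⟩)]
  symm
  refine Finset.sum_bij' (fun U _ => U.erase t) (fun V _ => V ∪ {t}) ?_ ?_ ?_ ?_ ?_
  all_goals simp only [Finset.mem_filter, Finset.mem_powerset, Finset.subset_erase]
  · rintro U ⟨hUS, hsU, -⟩
    simp [hsU, h.lt.ne, (Finset.erase_subset t U).trans hUS]
  · rintro V ⟨⟨hVS, -⟩, hsV⟩
    exact ⟨Finset.union_subset hVS (by simpa using h.right_mem), by simp [hsV], by simp⟩
  · rintro U ⟨-, -, htU⟩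
    rw [Finset.union_comm, ← Finset.insert_eq, Finset.insert_erase htU]
  · rintro V ⟨⟨-, htV⟩, -⟩
    rw [Finset.union_comm, ← Finset.insert_eq, Finset.erase_insert htV]
  · rintro U ⟨-, hsU, htU⟩
    have hsdiff : S.erase t \ U.erase t = S \ U := by grind
    rw [hsdiff]
    congr 1
    refine ncSum_congr fun D hD _ => ?_
    have hDS := hD.trans Finset.sdiff_subset
    have hsD : s ∉ D := fun hs => (Finset.mem_sdiff.mp (hD hs)).2 hsU
    have htD : t ∉ D := fun ht => (Finset.mem_sdiff.mp (hD ht)).2 htU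
    have hU : Uncrossed U D ↔ Uncrossed (U.erase t) D := by
      have hsU' : s ∈ U.erase t := Finset.mem_erase.mpr ⟨h.lt.ne, hsU⟩
      have := h.uncrossed_union_iff hsU' (Finset.mem_singleton_self t) hDS htD
      rwa [Finset.union_comm, ← Finset.insert_eq, Finset.insert_erase htU,
        and_iff_left (uncrossed_singleton_left t D)] at this
    simp only [Set.indicator_apply, Set.mem_ofPred_eq, hU, hf D hDS hsD htD]

theorem apply_erase_eq_splitSum [CommRing R] {f f' : Finset α → R} {S : Finset α} {s t : α}
    (h : IsSuccIn S s t) (hf : ∀ V ⊆ S, s ∉ V → t ∉ V → f' V = f V)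
    (hsum : ∀ U ⊆ S, s ∈ U → t ∈ U → ncSum f' (U.erase t) = ncSum f U) :
    f' (S.erase t) = splitSum f s t S := by
  -- Expand `hsum` for `U = S` over the union of the blocks of `s` and `t`: the terms of proper
  -- subsets agree by induction, so the remaining ones do too.
  classical
  induction S using Finset.strongInduction with
  | H S ih =>
  have hproper (U : Finset α) (hU : U ⊂ S) (hs : s ∈ U) (ht : t ∈ U) :
      f' (U.erase t) = splitSum f s t U :=
    ih U hU (h.of_subset hU.1 hs ht)
      (fun V hV => hf V (hV.trans hU.1)) (fun V hV => hsum V (hV.trans hU.1))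
  have hS : S ∈ S.powerset.filter fun U => s ∈ U ∧ t ∈ U := by simp [h.left_mem, h.right_mem]
  have heq := hsum S subset_rfl h.left_mem h.right_mem
  rw [ncSum_erase_eq_sum h hf, ncSum_eq_sum_splitSum f h, ← Finset.sum_erase_add _ _ hS,
    ← Finset.sum_erase_add _ _ hS, Finset.sum_congr rfl fun U hU => ?_, add_right_inj,
    sdiff_self, Finset.bot_eq_empty, ncSum_empty, mul_one, mul_one] at heq
  · exact heq
  · obtain ⟨hne, hU, hs, ht⟩ : U ≠ S ∧ U ⊆ S ∧ s ∈ U ∧ t ∈ U := by simpa using hU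
    rw [hproper U (hU.ssubset_of_ne hne) hs ht]

end NonCrossingSums

section Words

variable {α : Type*} [LinearOrder α] {M : Type*} [Monoid M]

/-- The product of the letters `a x`, `x ∈ S`, taken in increasing order of `x`. -/
def orderedProd (a : α → M) (S : Finset α) : M :=
  ((S.sort (· ≤ ·)).map a).prod

theorem orderedProd_empty (a : α → M) : orderedProd a ∅ = 1 := by
  simp [orderedProd]

theorem orderedProd_singleton (a : α → M) (s : α) : orderedProd a {s} = a s := by
  simp [orderedProd]

theorem orderedProd_congr {a b : α → M} {S : Finset α} (h : ∀ x ∈ S, a x = b x) :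
    orderedProd a S = orderedProd b S := by
  rw [orderedProd, List.map_congr_left fun x hx => h x ((Finset.mem_sort _).mp hx), orderedProd]

theorem orderedProd_union (a : α → M) {S T : Finset α} (h : ∀ x ∈ S, ∀ y ∈ T, x < y) :
    orderedProd a (S ∪ T) = orderedProd a S * orderedProd a T := by
  have hsort : (S ∪ T).sort (· ≤ ·) = S.sort (· ≤ ·) ++ T.sort (· ≤ ·) := by
    refine List.Perm.eq_of_pairwise' (r := (· ≤ ·)) (Finset.pairwise_sort _ _) ?_ ?_
    · simp only [List.pairwise_append, Finset.pairwise_sort, Finset.mem_sort, true_and]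
      exact fun x hx y hy => (h x hx y hy).le
    · refine (List.perm_ext_iff_of_nodup (Finset.sort_nodup _ _) ?_).mpr (by simp)
      refine (Finset.sort_nodup _ _).append (Finset.sort_nodup _ _) fun x hS hT => ?_
      exact (h x ((Finset.mem_sort _).mp hS) x ((Finset.mem_sort _).mp hT)).false
  rw [orderedProd, hsort, List.map_append, List.prod_append, orderedProd, orderedProd]

theorem IsSuccIn.orderedProd_erase_update (a : α → M) {S : Finset α} {s t : α}
    (h : IsSuccIn S s t) :
    orderedProd (Function.update a s (a s * a t)) (S.erase t) = orderedProd a S := by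
  have hlt := h.lt
  have hS : S = {x ∈ S | x < s} ∪ ({s} ∪ ({t} ∪ {x ∈ S | t < x})) := by
    ext x
    have := h.left_mem
    have := h.right_mem
    have := h.le_of_lt x
    have := lt_trichotomy x s
    simp only [Finset.mem_union, Finset.mem_filter, Finset.mem_singleton]
    grind
  have hSt : S.erase t = {x ∈ S | x < s} ∪ ({s} ∪ {x ∈ S | t < x}) := by
    ext x
    have := h.left_mem
    have := h.le_of_lt x
    simp only [Finset.mem_union, Finset.mem_filter, Finset.mem_singleton, Finset.mem_erase]
    grind
  have hne {x : α} (hx : x ≠ s) : Function.update a s (a s * a t) x = a x :=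
    Function.update_of_ne hx _ _
  conv_rhs => rw [hS]
  rw [hSt]
  repeat rw [orderedProd_union _ (by grind)]
  simp only [orderedProd_singleton, Function.update_self, mul_assoc]
  rw [orderedProd_congr fun x hx => hne (Finset.mem_filter.mp hx).2.ne,
    orderedProd_congr fun x hx => hne (hlt.trans (Finset.mem_filter.mp hx).2).ne']

theorem orderedProd_eq_smul {R A : Type*} [CommSemiring R] [Semiring A] [Algebra R A] {a : α → A}
    {S : Finset α} {s : α} {c : R} (hs : s ∈ S) (hc : a s = algebraMap R A c) :
    orderedProd a S = c • orderedProd a (S.erase s) := by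
  have hS : S = {x ∈ S | x < s} ∪ ({s} ∪ {x ∈ S | s < x}) := by
    ext x
    simp only [Finset.mem_union, Finset.mem_filter, Finset.mem_singleton]
    grind
  have hSs : S.erase s = {x ∈ S | x < s} ∪ {x ∈ S | s < x} := by
    ext x
    simp only [Finset.mem_union, Finset.mem_filter, Finset.mem_erase]
    grind
  conv_lhs => rw [hS]
  rw [hSs]
  repeat rw [orderedProd_union _ (by grind)]
  rw [orderedProd_singleton, hc, ← Algebra.smul_def, mul_smul_comm]

theorem sort_univ_map {n : ℕ} (e : Fin n ↪o α) :
    (Finset.univ.map e.toEmbedding).sort (· ≤ ·) = List.ofFn e := by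
  rw [← Finset.map_sort (r := (· ≤ ·)) _ _ _ (by simp), Fin.sort_univ, List.ofFn_eq_map]
  rfl

theorem exists_eq_univ_map (S : Finset α) :
    ∃ e : Fin S.card ↪o α, S = Finset.univ.map e.toEmbedding :=
  ⟨S.orderEmbOfFin rfl, (S.map_orderEmbOfFin_univ rfl).symm⟩

theorem orderedProd_univ_map {n : ℕ} (e : Fin n ↪o α) (a : α → M) :
    orderedProd a (Finset.univ.map e.toEmbedding) = (List.ofFn (a ∘ e)).prod := by
  rw [orderedProd, sort_univ_map, List.map_ofFn]

end Words

section FreeCumulants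

variable {α : Type*} [LinearOrder α] {A : Type*} [Ring A] [Algebra ℂ A]
  {κ : ∀ n, MultilinearMap ℂ (fun _ : Fin n => A) ℂ}

/-- The cumulant `κ_{|V|}(a_{i_1}, …, a_{i_s})` of the letters at the positions
`V = {i_1 < ⋯ < i_s}` of a word `a`. For `α = Fin n`, `partCum κ π a` is by definition the product
of `blockCum κ a V` over the blocks `V` of `π`. -/
noncomputable def blockCum (κ : ∀ n, MultilinearMap ℂ (fun _ : Fin n => A) ℂ) (a : α → A)
    (V : Finset α) : ℂ :=
  κ (V.sort (· ≤ ·)).length fun j => a ((V.sort (· ≤ ·)).get j)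

theorem blockCum_univ_map {n : ℕ} (e : Fin n ↪o α) (a : α → A) :
    blockCum κ a (Finset.univ.map e.toEmbedding) = κ n (a ∘ e) := by
  have hlist {l : List α} (hl : l.length = n) :
      κ l.length (fun j => a (l.get j)) = κ n fun j => a (l.get (j.cast hl.symm)) := by
    subst hl
    rfl
  rw [blockCum, hlist (by simp)]
  congr 1 with j
  simp [sort_univ_map]

theorem blockCum_univ {n : ℕ} (a : Fin n → A) : blockCum κ a Finset.univ = κ n a := by
  simpa using blockCum_univ_map (RelEmbedding.refl _) a

theorem blockCum_map {β : Type*} [LinearOrder β] (e : β ↪o α) (a : α → A) (V : Finset β) :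
    blockCum κ a (V.map e.toEmbedding) = blockCum κ (a ∘ e) V := by
  obtain ⟨e', hV⟩ := exists_eq_univ_map V
  rw [hV, blockCum_univ_map, Finset.map_map]
  exact blockCum_univ_map (e'.trans e) a

theorem blockCum_congr {a b : α → A} {V : Finset α} (h : ∀ x ∈ V, a x = b x) :
    blockCum κ a V = blockCum κ b V := by
  rw [blockCum, blockCum]
  congr 1 with j
  exact h _ ((Finset.mem_sort _).mp (List.get_mem _ j))

theorem MomentCumulant.map_orderedProd {φ : A →ₗ[ℂ] ℂ} (hφ1 : φ 1 = 1) (hκ : MomentCumulant φ κ)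
    (a : α → A) (S : Finset α) : φ (orderedProd a S) = ncSum (blockCum κ a) S := by
  classical
  obtain rfl | hS := S.eq_empty_or_nonempty
  · rw [orderedProd_empty, ncSum_empty, hφ1]
  obtain ⟨e, he⟩ := exists_eq_univ_map S
  rw [he, orderedProd_univ_map, hκ _ hS.card_pos, ncSum_map]
  simp only [blockCum_map]
  exact Finset.sum_congr (Finset.filter_congr fun π _ => isNonCrossing_iff π) fun _ _ => rfl

theorem MomentCumulant.blockCum_singleton {φ : A →ₗ[ℂ] ℂ} (hφ1 : φ 1 = 1)
    (hκ : MomentCumulant φ κ) (a : α → A) (s : α) : blockCum κ a {s} = φ (a s) := by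
  have h := hκ.map_orderedProd hφ1 a {s}
  have hblocks : {B ∈ ({s} : Finset α).powerset | s ∈ B} = {{s}} := by
    ext B
    simp only [Finset.mem_filter, Finset.mem_powerset, Finset.subset_singleton_iff,
      Finset.mem_singleton]
    grind
  rw [orderedProd_singleton, ncSum_eq_sum_block _ (Finset.mem_singleton_self s), hblocks,
    Finset.sum_singleton, sdiff_self, Finset.bot_eq_empty, ncSum_empty, mul_one] at h
  exact h.symm

theorem MomentCumulant.blockCum_eq_zero_of_scalar {φ : A →ₗ[ℂ] ℂ} (hφ1 : φ 1 = 1)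
    (hκ : MomentCumulant φ κ) {a : α → A} {S : Finset α} {s : α} {c : ℂ} (hs : s ∈ S)
    (hc : a s = algebraMap ℂ A c) (hS : 1 < S.card) : blockCum κ a S = 0 := by
  classical
  induction S using Finset.strongInduction with
  | H S ih =>
  have hsingle : blockCum κ a {s} = c := by
    rw [hκ.blockCum_singleton hφ1, hc, Algebra.algebraMap_eq_smul_one, map_smul, hφ1]
    simp
  have hsum := hκ.map_orderedProd hφ1 a S
  rw [orderedProd_eq_smul hs hc, map_smul, hκ.map_orderedProd hφ1, ncSum_eq_sum_block _ hs,
    Finset.sum_eq_add (a := {s}) (b := S)] at hsum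
  · have hrest : ncSum ({D | Uncrossed {s} D}.indicator (blockCum κ a)) (S \ {s}) =
        ncSum (blockCum κ a) (S.erase s) := by
      simp only [uncrossed_singleton_left, Set.ofPred_true, Set.indicator_univ,
        Finset.sdiff_singleton_eq_erase]
    simpa [hsingle, hrest, ncSum_empty] using hsum
  · rintro rfl
    simp at hS
  · rintro B hB ⟨hBs, hBS⟩
    obtain ⟨hB, hsB⟩ : B ⊆ S ∧ s ∈ B := by simpa using hB
    have hcard : 1 < B.card := by
      by_contra! hcard
      exact hBs (Finset.eq_singleton_iff_unique_mem.mpr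
        ⟨hsB, fun x hx => Finset.card_le_one.mp hcard x hx s hsB⟩)
    rw [ih B (hB.ssubset_of_ne hBS) hsB hcard, zero_mul]
  · simp [hs]
  · simp [hs]

theorem MomentCumulant.blockCum_erase_update {φ : A →ₗ[ℂ] ℂ} (hφ1 : φ 1 = 1)
    (hκ : MomentCumulant φ κ) (a : α → A) {S : Finset α} {s t : α} (h : IsSuccIn S s t) :
    blockCum κ (Function.update a s (a s * a t)) (S.erase t) = splitSum (blockCum κ a) s t S := by
  refine apply_erase_eq_splitSum h (fun V _ hs _ => ?_) fun U hU hs ht => ?_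
  · exact blockCum_congr fun x hx => Function.update_of_ne (ne_of_mem_of_not_mem hx hs) _ _
  · rw [← hκ.map_orderedProd hφ1, ← hκ.map_orderedProd hφ1,
      (h.of_subset hU hs ht).orderedProd_erase_update a]

theorem multilinear_add_eq_left {R ι M N : Type*} [Semiring R] [AddCommMonoid M] [AddCommMonoid N]
    [Module R M] [Module R N] [Finite ι] (f : MultilinearMap R (fun _ : ι => M) N) {b : ι → M}
    (hf : ∀ m i, m i = b i → f m = 0) (m : ι → M) : f (m + b) = f m := by
  classical
  cases nonempty_fintype ι
  rw [f.map_add_univ, Finset.sum_eq_single Finset.univ]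
  · simp
  · intro s _ hs
    obtain ⟨i, hi⟩ : ∃ i, i ∉ s := by simpa [Finset.eq_univ_iff_forall] using hs
    exact hf _ i (Finset.piecewise_eq_of_notMem _ _ _ hi)
  · simp

theorem MomentCumulant.apply_sub_algebraMap {φ : A →ₗ[ℂ] ℂ} (hφ1 : φ 1 = 1)
    (hκ : MomentCumulant φ κ) {n : ℕ} (hn : 1 < n) (a : Fin n → A) (c : Fin n → ℂ) :
    κ n (fun j => a j - algebraMap ℂ A (c j)) = κ n a := by
  have hscalar (m : Fin n → A) (j : Fin n) (hm : m j = algebraMap ℂ A (c j)) : κ n m = 0 := by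
    rw [← blockCum_univ]
    exact hκ.blockCum_eq_zero_of_scalar hφ1 (Finset.mem_univ j) hm (by simpa using hn)
  rw [← multilinear_add_eq_left (κ n) hscalar]
  congr 1 with j
  simp

end FreeCumulants

section Freeness

variable {α : Type*} [LinearOrder α] {A : Type*} [Ring A] [Algebra ℂ A] {φ : A →ₗ[ℂ] ℂ}
  {κ : ∀ n, MultilinearMap ℂ (fun _ : Fin n => A) ℂ} {ι : Type*}

/-- All mixed cumulants of order `n` vanish: the instance of `FreeIndepCumulant` at a single
order, which allows induction on the order. -/
def MixedCumulantsVanish (S : ι → Set A) (κ : ∀ n, MultilinearMap ℂ (fun _ : Fin n => A) ℂ)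
    (n : ℕ) : Prop :=
  ∀ (a : Fin n → A) (idx : Fin n → ι), (∀ j, a j ∈ S (idx j)) →
    (∃ j j', idx j ≠ idx j') → κ n a = 0

theorem freeIndepCumulant_iff_forall {S : ι → Set A} :
    FreeIndepCumulant S κ ↔ ∀ n, MixedCumulantsVanish S κ n := by
  refine ⟨fun h n a idx ha hmix => h n ?_ a idx ha hmix, fun h n _ => h n⟩
  obtain ⟨j, j', hne⟩ := hmix
  have : j ≠ j' := fun e => hne (e ▸ rfl)
  omega

theorem MixedCumulantsVanish.blockCum_eq_zero {S : ι → Set A} {V : Finset α}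
    (h : MixedCumulantsVanish S κ V.card) {a : α → A} {idx : α → ι} (ha : ∀ x, a x ∈ S (idx x))
    {x y : α} (hx : x ∈ V) (hy : y ∈ V) (hxy : idx x ≠ idx y) : blockCum κ a V = 0 := by
  obtain ⟨e, he⟩ := exists_eq_univ_map V
  rw [he, blockCum_univ_map]
  rw [he, Finset.mem_map] at hx hy
  obtain ⟨j, -, rfl⟩ := hx
  obtain ⟨j', -, rfl⟩ := hy
  exact h (a ∘ e) (idx ∘ e) (fun i => ha (e i)) ⟨j, j', hxy⟩

theorem isSuccIn_univ {n : ℕ} {j j' : Fin n} :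
    IsSuccIn Finset.univ j j' ↔ (j : ℕ) + 1 = j' := by
  refine ⟨fun h => ?_, fun h => ⟨Finset.mem_univ j, Finset.mem_univ j', by omega, by omega⟩⟩
  have hlt : (j : ℕ) < j' := h.lt
  have hle : (j' : ℕ) ≤ j + 1 :=
    h.le_of_lt ⟨j + 1, by omega⟩ (Finset.mem_univ _) (Nat.lt_succ_self (j : ℕ))
  omega

theorem MomentCumulant.map_prod_eq_of_alternating (hφ1 : φ 1 = 1) (hκ : MomentCumulant φ κ)
    {S : ι → Set A} {n : ℕ} (hn : 0 < n) (hmix : ∀ m < n, MixedCumulantsVanish S κ m)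
    {a : Fin n → A} {idx : Fin n → ι} (ha : ∀ j, a j ∈ S (idx j)) (hφa : ∀ j, φ (a j) = 0)
    (halt : ∀ j j' : Fin n, (j : ℕ) + 1 = j' → idx j ≠ idx j') :
    φ (List.ofFn a).prod = κ n a := by
  have : NeZero n := ⟨hn.ne'⟩
  calc φ (List.ofFn a).prod = ncSum (blockCum κ a) Finset.univ := by
        rw [← hκ.map_orderedProd hφ1]
        simpa using congrArg φ (orderedProd_univ_map (RelEmbedding.refl _) a).symm
    _ = blockCum κ a Finset.univ := by
        refine ncSum_eq_self Finset.univ_nonempty (fun j _ => ?_) fun V hV j j' hjj' hj hj' => ?_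
        · rw [hκ.blockCum_singleton hφ1, hφa]
        · have hcard : V.card < n := by simpa using Finset.card_lt_card hV
          exact (hmix _ hcard).blockCum_eq_zero ha hj hj' (halt j j' (isSuccIn_univ.mp hjj'))
    _ = κ n a := blockCum_univ a

theorem FreeIndepCumulant.freeIndepMoment (hφ1 : φ 1 = 1) (hκ : MomentCumulant φ κ)
    {S : ι → Set A} (h : FreeIndepCumulant S κ) : FreeIndepMoment φ S := by
  have hmix := freeIndepCumulant_iff_forall.mp h
  intro n hn a idx ha hφa halt
  rw [hκ.map_prod_eq_of_alternating hφ1 hn (fun m _ => hmix m) ha hφa halt]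
  obtain rfl | hn1 := (Nat.succ_le_of_lt hn).eq_or_lt
  · rw [← blockCum_univ, Finset.univ_unique, hκ.blockCum_singleton hφ1, hφa]
  · exact hmix n a idx ha ⟨⟨0, hn⟩, ⟨1, hn1⟩, halt _ _ rfl⟩

theorem FreeIndepMoment.cumulant_eq_zero_of_alternating (hφ1 : φ 1 = 1) (hκ : MomentCumulant φ κ)
    {Alg : ι → Subalgebra ℂ A} (h : FreeIndepMoment φ fun i => (Alg i : Set A)) {n : ℕ}
    (hn : 1 < n) (hmix : ∀ m < n, MixedCumulantsVanish (fun i => (Alg i : Set A)) κ m)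
    {a : Fin n → A} {idx : Fin n → ι} (ha : ∀ j, a j ∈ Alg (idx j))
    (halt : ∀ j j' : Fin n, (j : ℕ) + 1 = j' → idx j ≠ idx j') : κ n a = 0 := by
  let b : Fin n → A := fun j => a j - algebraMap ℂ A (φ (a j))
  have hb (j : Fin n) : b j ∈ Alg (idx j) := sub_mem (ha j) (Subalgebra.algebraMap_mem _ _)
  have hφb (j : Fin n) : φ (b j) = 0 := by
    simp [b, Algebra.algebraMap_eq_smul_one, hφ1]
  calc κ n a = κ n b := (hκ.apply_sub_algebraMap hφ1 hn a fun j => φ (a j)).symm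
    _ = φ (List.ofFn b).prod :=
        (hκ.map_prod_eq_of_alternating hφ1 (by omega) hmix hb hφb halt).symm
    _ = 0 := h n (by omega) b idx hb hφb halt

theorem MomentCumulant.blockCum_eq_zero_of_isSuccIn (hφ1 : φ 1 = 1) (hκ : MomentCumulant φ κ)
    {Alg : ι → Subalgebra ℂ A} {V : Finset α}
    (hmix : ∀ m < V.card, MixedCumulantsVanish (fun i => (Alg i : Set A)) κ m)
    {a : α → A} {idx : α → ι} (ha : ∀ x, a x ∈ Alg (idx x)) {s t : α} (hst : IsSuccIn V s t)
    (hidx : idx s = idx t) {x : α} (hx : x ∈ V) (hxs : idx x ≠ idx s) : blockCum κ a V = 0 := by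
  classical
  have hmerged : blockCum κ (Function.update a s (a s * a t)) (V.erase t) = 0 := by
    refine (hmix _ (Finset.card_erase_lt_of_mem hst.right_mem)).blockCum_eq_zero (idx := idx)
      (fun y => ?_) (Finset.mem_erase.mpr ⟨?_, hx⟩)
      (Finset.mem_erase.mpr ⟨hst.lt.ne, hst.left_mem⟩) hxs
    · obtain rfl | hys := eq_or_ne y s
      · simpa using mul_mem (ha y) (hidx ▸ ha t)
      · simpa [hys] using ha y
    · rintro rfl
      exact hxs hidx.symm
  have hsplit (B : Finset α) (hBV : B ⊆ V) (hsB : s ∈ B) (htB : t ∉ B) :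
      blockCum κ a B * blockCum κ a (V \ B) = 0 := by
    have htVB : t ∈ V \ B := Finset.mem_sdiff.mpr ⟨hst.right_mem, htB⟩
    by_cases hxB : x ∈ B
    · have hcard := Finset.card_lt_card (hBV.ssubset_of_not_subset fun h => htB (h hst.right_mem))
      rw [(hmix _ hcard).blockCum_eq_zero ha hxB hsB hxs, zero_mul]
    · have hcard := Finset.card_lt_card (Finset.sdiff_ssubset hBV ⟨s, hsB⟩)
      rw [(hmix _ hcard).blockCum_eq_zero ha (Finset.mem_sdiff.mpr ⟨hx, hxB⟩) htVB
        (hidx ▸ hxs), mul_zero]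
  rw [hκ.blockCum_erase_update hφ1 a hst, splitSum, Finset.sum_eq_zero, add_zero] at hmerged
  · exact hmerged
  · intro B hB
    obtain ⟨hBV, hsB, htB, -⟩ := Finset.mem_filter.mp hB
    exact hsplit B (Finset.mem_powerset.mp hBV) hsB htB

theorem FreeIndepMoment.freeIndepCumulant (hφ1 : φ 1 = 1) (hκ : MomentCumulant φ κ)
    {Alg : ι → Subalgebra ℂ A} (h : FreeIndepMoment φ fun i => (Alg i : Set A)) :
    FreeIndepCumulant (fun i => (Alg i : Set A)) κ := by
  refine freeIndepCumulant_iff_forall.mpr fun n => ?_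
  induction n using Nat.strong_induction_on with
  | h n hmix =>
  rintro a idx ha ⟨i, i', hne⟩
  have hn : 1 < n := by
    have : i ≠ i' := fun e => hne (e ▸ rfl)
    omega
  by_cases halt : ∀ j j' : Fin n, (j : ℕ) + 1 = j' → idx j ≠ idx j'
  · exact h.cumulant_eq_zero_of_alternating hφ1 hκ hn hmix ha halt
  · push Not at halt
    obtain ⟨j, j', hjj', hidx⟩ := halt
    obtain ⟨x, hx⟩ : ∃ x, idx x ≠ idx j := by
      by_contra! hall
      exact hne ((hall i).trans (hall i').symm)
    rw [← blockCum_univ]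
    exact hκ.blockCum_eq_zero_of_isSuccIn hφ1 (by simpa using hmix) ha (isSuccIn_univ.mpr hjj')
      hidx (Finset.mem_univ x) hx

end Freeness

/-- **Equivalence of the two definitions of free independence.**
Let `(A, φ)` be a non-commutative probability space with free cumulants `κ`
(the multilinear functionals satisfying the moment–cumulant relation), and let
`(Alg i)` be unital subalgebras of `A`. Then vanishing of mixed free cumulants
(freeness in the cumulant sense) is equivalent to freeness in the moment sense. -/
theorem freeIndepCumulant_iff_freeIndepMoment
    {A : Type*} [Ring A] [Algebra ℂ A] {ι : Type*}
    (φ : A →ₗ[ℂ] ℂ) (hφ1 : φ 1 = 1)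
    (κ : ∀ n, MultilinearMap ℂ (fun _ : Fin n => A) ℂ)
    (hκ : MomentCumulant φ κ)
    (Alg : ι → Subalgebra ℂ A) :
    FreeIndepCumulant (fun i => (Alg i : Set A)) κ ↔
      FreeIndepMoment φ (fun i => (Alg i : Set A)) :=
  ⟨fun h => h.freeIndepMoment hφ1 hκ, fun h => h.freeIndepCumulant hφ1 hκ⟩
end

section
/- Let (A, φ) be a *-probability space with free cumulants (κ_n), and let (A_i)_{i∈I} be unital *-subalgebras of A that are freely independent in the cumulant sense. Let a = a_1 ⋯ a_k and b = b_1 ⋯ b_k, where for all 1 ≤ u ≤ k, a_u, b_u ∈ A_{i_u} with φ(a_u) = 0, φ(b_u) = 0, and i_u ≠ i_{u+1} for 1 ≤ u ≤ k−1. Then κ_2(a*, b) = ∏_{u=1}^{k} κ_2(a_u*, b_u). -/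
/-!
The moment–cumulant relation kills the moment of every nonempty alternating word in centered
letters: a non-crossing partition has a singleton block, which contributes `φ(w_u) = 0`, or a block
containing two neighbours, which contributes a mixed cumulant.

Splitting letters, or products of two letters of one algebra, into a scalar and a centered part
then gives `φ(x_m ⋯ x_1 w_1 ⋯ w_n) = 0` for arbitrary letters `x_u` as soon as `m < n`: each
splitting uses up one `x` and at most one `w`. Therefore, when `x_1` and `w_1` lie in one algebra,
the centered part of `x_1 w_1` does not contribute to `φ(x_k ⋯ x_1 w_1 ⋯ w_k)`, so
`φ(x_k ⋯ x_1 w_1 ⋯ w_k) = φ(x_1 w_1) φ(x_k ⋯ x_2 w_2 ⋯ w_k)` and the moment factorises.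
-/

open scoped BigOperators ComplexOrder

section NonCrossing

variable {n : ℕ} {π : Finpartition (Finset.univ : Finset (Fin n))}

theorem isNonCrossing_of_le_three (hn : n ≤ 3) : IsNonCrossing π := by
  intro p q r s _ _ _
  omega

namespace IsNonCrossing

theorem between_of_nested (hπ : IsNonCrossing π) {B C : Finset (Fin n)} (hB : B ∈ π.parts)
    (hC : C ∈ π.parts) (hBC : B ≠ C) {p q m s : Fin n} (hp : p ∈ B) (hq : q ∈ B) (hm : m ∈ C)
    (hs : s ∈ C) (hpm : p < m) (hmq : m < q) : p < s ∧ s < q := by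
  have hsB : s ∉ B := fun h => hBC (π.eq_of_mem_parts hB hC h hs)
  constructor
  · by_contra! hsp
    have hsp : s < p := hsp.lt_of_ne (ne_of_mem_of_not_mem hp hsB).symm
    exact hBC (hπ s p m q hsp hpm hmq C hC B hB hs hm hp hq).symm
  · by_contra! hqs
    have hqs : q < s := hqs.lt_of_ne (ne_of_mem_of_not_mem hq hsB)
    exact hBC (hπ p m q s hpm hmq hqs B hB C hC hp hq hm hs)

theorem exists_adjacent_of_lt (hπ : IsNonCrossing π) (hnontriv : ∀ B ∈ π.parts, B.Nontrivial)
    {B : Finset (Fin n)} (hB : B ∈ π.parts) {p q : Fin n} (hp : p ∈ B) (hq : q ∈ B)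
    (hpq : p < q) :
    ∃ V ∈ π.parts, ∃ u ∈ V, ∃ v ∈ V, (u : ℕ) + 1 = v := by
  induction hd : (q : ℕ) - p using Nat.strong_induction_on generalizing B p q with
  | _ d ih =>
    let m : Fin n := ⟨p + 1, by omega⟩
    have hpm : p < m := Fin.lt_def.2 (Nat.lt_succ_self _)
    by_cases hmB : m ∈ B
    · exact ⟨B, hB, p, hp, m, hmB, rfl⟩
    obtain ⟨C, hC, hmC⟩ := π.exists_mem (Finset.mem_univ m)
    have hBC : B ≠ C := (ne_of_mem_of_not_mem' hmC hmB).symm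
    obtain ⟨s, hs, hsm⟩ := (hnontriv C hC).exists_ne m
    have hmq : m < q := lt_of_le_of_ne hpq (ne_of_mem_of_not_mem hq hmB).symm
    obtain ⟨hps, hsq⟩ := hπ.between_of_nested hB hC hBC hp hq hmC hs hpm hmq
    have hms : m < s := lt_of_le_of_ne hps hsm.symm
    exact ih (s - m) (by omega) hC hmC hs hms rfl

theorem exists_singleton_or_adjacent (hπ : IsNonCrossing π) (hn : 0 < n) :
    (∃ p, {p} ∈ π.parts) ∨ ∃ V ∈ π.parts, ∃ p ∈ V, ∃ q ∈ V, (p : ℕ) + 1 = q := by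
  by_cases hsing : ∃ p, {p} ∈ π.parts
  · exact Or.inl hsing
  have hnontriv : ∀ B ∈ π.parts, B.Nontrivial := by
    intro B hB
    refine (π.nonempty_of_mem_parts hB).exists_eq_singleton_or_nontrivial.resolve_left ?_
    rintro ⟨p, rfl⟩
    exact hsing ⟨p, hB⟩
  obtain ⟨B, hB, -⟩ := π.exists_mem (Finset.mem_univ (⟨0, hn⟩ : Fin n))
  obtain ⟨p, hp, q, hq, hpq⟩ := hnontriv B hB
  rcases lt_or_gt_of_ne hpq with hlt | hgt
  · exact Or.inr (hπ.exists_adjacent_of_lt hnontriv hB hp hq hlt)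
  · exact Or.inr (hπ.exists_adjacent_of_lt hnontriv hB hq hp hgt)

end IsNonCrossing

end NonCrossing

section Cumulants

variable {A : Type*} [Ring A] [Algebra ℂ A] {φ : A →ₗ[ℂ] ℂ}
  {κ : ∀ n, MultilinearMap ℂ (fun _ : Fin n => A) ℂ}

theorem cumulant_get_eq_of_map_eq_ofFn {α : Type*} {f : α → A} {l : List α} {m : ℕ}
    {c : Fin m → A} (h : l.map f = List.ofFn c) :
    κ l.length (fun j => f (l.get j)) = κ m c := by
  obtain rfl : l.length = m := by simpa using congrArg List.length h
  congr 1
  apply List.ofFn_injective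
  rw [← h]
  exact List.ofFn_getElem_eq_map l f

namespace MomentCumulant

theorem map_prod_eq_sum_of_le_three (hκ : MomentCumulant φ κ) {n : ℕ} (hn : 0 < n) (hn3 : n ≤ 3)
    (a : Fin n → A) :
    φ (List.ofFn a).prod =
      ∑ π : Finpartition (Finset.univ : Finset (Fin n)), partCum κ π a := by
  classical
  rw [hκ n hn a, Finset.filter_true_of_mem fun π _ => isNonCrossing_of_le_three hn3]

theorem cumulant_one (hκ : MomentCumulant φ κ) (x : A) : κ 1 ![x] = φ x := by
  have huniv : (Finset.univ : Finset (Finpartition (Finset.univ : Finset (Fin 1)))) = {⊥} := by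
    decide
  have hbot : (⊥ : Finpartition (Finset.univ : Finset (Fin 1))).parts = {{0}} := by decide
  have hmoment := hκ.map_prod_eq_sum_of_le_three one_pos (by norm_num) ![x]
  rw [huniv, Finset.sum_singleton, partCum, hbot, Finset.prod_singleton,
    cumulant_get_eq_of_map_eq_ofFn (c := ![x]) (by simp)] at hmoment
  simpa using hmoment.symm

theorem cumulant_two (hκ : MomentCumulant φ κ) (x y : A) :
    κ 2 ![x, y] = φ (x * y) - φ x * φ y := by
  have huniv : (Finset.univ : Finset (Finpartition (Finset.univ : Finset (Fin 2)))) = {⊤, ⊥} := by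
    decide
  have htop : (⊤ : Finpartition (Finset.univ : Finset (Fin 2))).parts = {Finset.univ} := by decide
  have hbot : (⊥ : Finpartition (Finset.univ : Finset (Fin 2))).parts = {{0}, {1}} := by decide
  have hmoment := hκ.map_prod_eq_sum_of_le_three two_pos (by norm_num) ![x, y]
  rw [huniv, Finset.sum_pair (by decide), partCum, partCum, htop, hbot, Finset.prod_singleton,
    Finset.prod_pair (by decide),
    cumulant_get_eq_of_map_eq_ofFn (c := ![x, y]) (by simp [Fin.sort_univ, List.finRange_succ]),
    cumulant_get_eq_of_map_eq_ofFn (c := ![x]) (by simp),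
    cumulant_get_eq_of_map_eq_ofFn (c := ![y]) (by simp),
    hκ.cumulant_one, hκ.cumulant_one] at hmoment
  rw [eq_sub_iff_add_eq, ← hmoment]
  simp

theorem partCum_eq_zero_of_singleton_mem (hκ : MomentCumulant φ κ) {n : ℕ}
    {π : Finpartition (Finset.univ : Finset (Fin n))} {p : Fin n} (hp : {p} ∈ π.parts)
    {c : Fin n → A} (hc : φ (c p) = 0) : partCum κ π c = 0 := by
  refine Finset.prod_eq_zero hp ?_
  rw [cumulant_get_eq_of_map_eq_ofFn (c := ![c p]) (by simp), hκ.cumulant_one, hc]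

end MomentCumulant

theorem FreeIndepCumulant.partCum_eq_zero_of_mem_part {ι : Type*} {S : ι → Set A}
    (hfree : FreeIndepCumulant S κ) {n : ℕ} {c : Fin n → A} {i : Fin n → ι}
    (hmem : ∀ u, c u ∈ S (i u)) {π : Finpartition (Finset.univ : Finset (Fin n))}
    {V : Finset (Fin n)} (hV : V ∈ π.parts) {p q : Fin n} (hp : p ∈ V) (hq : q ∈ V)
    (hpq : i p ≠ i q) : partCum κ π c = 0 := by
  refine Finset.prod_eq_zero hV ?_
  obtain ⟨j, hj⟩ := List.get_of_mem ((Finset.mem_sort (· ≤ ·)).2 hp)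
  obtain ⟨j', hj'⟩ := List.get_of_mem ((Finset.mem_sort (· ≤ ·)).2 hq)
  have hcard : 2 ≤ (V.sort (· ≤ ·)).length := by
    rw [Finset.length_sort]
    exact Finset.one_lt_card.2 ⟨p, hp, q, hq, fun h => hpq (congrArg i h)⟩
  exact hfree _ hcard _ (fun j => i ((V.sort (· ≤ ·)).get j)) (fun j => hmem _)
    ⟨j, j', by rwa [hj, hj']⟩

end Cumulants

section Centering

variable {R A : Type*} [CommRing R] [Ring A] [Algebra R A]

/-- The centered part `x - φ(x)1` of an element `x`, which allows a product of two letters of one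
algebra to be split into a scalar and a centered letter. -/
def centeredPart (φ : A →ₗ[R] R) (x : A) : A := x - φ x • 1

theorem map_centeredPart {φ : A →ₗ[R] R} (hφ1 : φ 1 = 1) (x : A) :
    φ (centeredPart φ x) = 0 := by
  simp [centeredPart, hφ1]

theorem centeredPart_mem (φ : A →ₗ[R] R) {B : Subalgebra R A} {x : A} (hx : x ∈ B) :
    centeredPart φ x ∈ B :=
  sub_mem hx (B.smul_mem (one_mem B) _)

theorem map_mul_mul_eq_add_centeredPart (φ : A →ₗ[R] R) (u x v : A) :
    φ (u * (x * v)) = φ x * φ (u * v) + φ (u * (centeredPart φ x * v)) := by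
  simp [centeredPart, sub_mul, mul_sub]

end Centering

/-- A word of letters `p.2` labelled by indices `p.1` is alternating and centered, with respect to
`φ` and the family `S`, if each letter lies in the member of `S` given by its label, is
annihilated by `φ`, and consecutive labels differ. The empty word is allowed. -/
structure IsAlternatingCentered {A ι : Type*} [Ring A] [Algebra ℂ A] (φ : A →ₗ[ℂ] ℂ)
    (S : ι → Set A) (w : List (ι × A)) : Prop where
  mem : ∀ p ∈ w, p.2 ∈ S p.1
  centered : ∀ p ∈ w, φ p.2 = 0
  isChain : w.IsChain (fun p q => p.1 ≠ q.1)

namespace IsAlternatingCentered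

variable {A ι : Type*} [Ring A] [Algebra ℂ A] {φ : A →ₗ[ℂ] ℂ}
  {κ : ∀ n, MultilinearMap ℂ (fun _ : Fin n => A) ℂ}

section Words

variable {S : ι → Set A} {j : ι} {x y : A} {w : List (ι × A)}

theorem tail (hw : IsAlternatingCentered φ S ((j, y) :: w)) : IsAlternatingCentered φ S w where
  mem p hp := hw.mem p (List.mem_cons_of_mem _ hp)
  centered p hp := hw.centered p (List.mem_cons_of_mem _ hp)
  isChain := hw.isChain.tail

theorem cons (hw : IsAlternatingCentered φ S w) (hx : x ∈ S j) (hφx : φ x = 0)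
    (hj : ∀ p ∈ w.head?, j ≠ p.1) : IsAlternatingCentered φ S ((j, x) :: w) where
  mem := List.forall_mem_cons.2 ⟨hx, hw.mem⟩
  centered := List.forall_mem_cons.2 ⟨hφx, hw.centered⟩
  isChain := List.isChain_cons.2 ⟨hj, hw.isChain⟩

theorem replace_head (hw : IsAlternatingCentered φ S ((j, y) :: w)) (hx : x ∈ S j)
    (hφx : φ x = 0) : IsAlternatingCentered φ S ((j, x) :: w) :=
  hw.tail.cons hx hφx (List.isChain_cons.1 hw.isChain).1

theorem map_prod_eq_zero (hw : IsAlternatingCentered φ S w) (hκ : MomentCumulant φ κ)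
    (hfree : FreeIndepCumulant S κ) (hne : w ≠ []) : φ (w.map Prod.snd).prod = 0 := by
  classical
  have hlen : 0 < w.length := List.length_pos_iff.2 hne
  rw [← List.ofFn_getElem_eq_map, hκ _ hlen]
  refine Finset.sum_eq_zero fun π hπ => ?_
  rcases (Finset.mem_filter.1 hπ).2.exists_singleton_or_adjacent hlen with
    ⟨p, hp⟩ | ⟨V, hV, p, hp, q, hq, hpq⟩
  · exact hκ.partCum_eq_zero_of_singleton_mem hp (hw.centered _ (List.getElem_mem _))
  · have hlabels : w[p].1 ≠ w[q].1 := by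
      simpa [← hpq] using List.isChain_iff_getElem.1 hw.isChain p (hpq ▸ q.isLt)
    exact hfree.partCum_eq_zero_of_mem_part (i := fun u => w[u].1)
      (fun u => hw.mem _ (List.getElem_mem _)) hV hp hq hlabels

end Words

section Subalgebras

variable {B : ι → Subalgebra ℂ A}

theorem map_reverse_prod_mul_prod_eq_zero (hφ1 : φ 1 = 1) (hκ : MomentCumulant φ κ)
    (hfree : FreeIndepCumulant (fun j => (B j : Set A)) κ) {w : List (ι × A)}
    (hw : IsAlternatingCentered φ (fun j => (B j : Set A)) w) {X : List A}
    (hX : ∀ x ∈ X, ∃ j, x ∈ B j) (hlen : X.length < w.length) :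
    φ (X.reverse.prod * (w.map Prod.snd).prod) = 0 := by
  induction X generalizing w with
  | nil => simpa using hw.map_prod_eq_zero hκ hfree (List.length_pos_iff.1 hlen)
  | cons x X ih =>
    obtain ⟨⟨i, hxi⟩, hX⟩ := List.forall_mem_cons.1 hX
    match w with
    | (j, y) :: w =>
      simp only [List.length_cons, add_lt_add_iff_right] at hlen
      simp only [List.reverse_cons, List.prod_append, List.map_cons, List.prod_cons,
        List.prod_nil, mul_one, mul_assoc]
      by_cases hij : i = j
      · subst hij
        have hword := hw.replace_head
          (centeredPart_mem φ (mul_mem hxi (hw.mem _ List.mem_cons_self)))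
          (map_centeredPart hφ1 (x * y))
        have hcentered := ih hword hX (Nat.lt_succ_of_lt hlen)
        have hscalar := ih hw.tail hX hlen
        simp only [List.map_cons, List.prod_cons] at hcentered
        rw [← mul_assoc x, map_mul_mul_eq_add_centeredPart, hscalar, hcentered, mul_zero, add_zero]
      · have hword := hw.cons (centeredPart_mem φ hxi)
          (map_centeredPart hφ1 x) (by simpa using hij)
        have hcentered := ih hword hX (Nat.lt_succ_of_lt (Nat.lt_succ_of_lt hlen))
        have hscalar := ih hw hX (Nat.lt_succ_of_lt hlen)
        simp only [List.map_cons, List.prod_cons] at hcentered hscalar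
        rw [map_mul_mul_eq_add_centeredPart, hscalar, hcentered, mul_zero, add_zero]

theorem map_reverse_prod_mul_prod_eq_prod (hφ1 : φ 1 = 1) (hκ : MomentCumulant φ κ)
    (hfree : FreeIndepCumulant (fun j => (B j : Set A)) κ) {k : ℕ} {x y : Fin k → A}
    {i : Fin k → ι} (hx : ∀ u, x u ∈ B (i u))
    (hy : IsAlternatingCentered φ (fun j => (B j : Set A)) (List.ofFn fun u => (i u, y u))) :
    φ ((List.ofFn x).reverse.prod * (List.ofFn y).prod) = ∏ u, φ (x u * y u) := by
  induction k with
  | zero => simp [hφ1]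
  | succ k ih =>
    rw [List.ofFn_succ] at hy
    have hword := hy.replace_head
      (centeredPart_mem φ (mul_mem (hx 0) (hy.mem _ List.mem_cons_self)))
      (map_centeredPart hφ1 (x 0 * y 0))
    have hcentered := map_reverse_prod_mul_prod_eq_zero hφ1 hκ hfree hword
      (X := List.ofFn fun u => x u.succ) (List.forall_mem_ofFn_iff.2 fun u => ⟨_, hx u.succ⟩)
      (by simp)
    simp only [List.map_cons, List.map_ofFn, Function.comp_def, List.prod_cons] at hcentered
    simp only [List.ofFn_succ, List.reverse_cons, List.prod_append, List.prod_cons,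
      List.prod_nil, mul_one, mul_assoc, Fin.prod_univ_succ]
    rw [← mul_assoc (x 0), map_mul_mul_eq_add_centeredPart, hcentered, add_zero,
      ih (fun u => hx u.succ) hy.tail]

end Subalgebras

end IsAlternatingCentered

theorem star_list_prod {M : Type*} [Monoid M] [StarMul M] (l : List M) :
    star l.prod = (l.map star).reverse.prod :=
  unop_map_list_prod starMulEquiv l

theorem kappa_two_star_word_same_shape_general
    {A : Type*} [Ring A] [Algebra ℂ A] {ι : Type*}
    (φ : A →ₗ[ℂ] ℂ) (hφ1 : φ 1 = 1)
    (κ : ∀ n, MultilinearMap ℂ (fun _ : Fin n => A) ℂ)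
    (hκ : MomentCumulant φ κ)
    (B : ι → Subalgebra ℂ A)
    (hfree : FreeIndepCumulant (fun j => (B j : Set A)) κ)
    (k : ℕ) (hk : 0 < k)
    (x y : Fin k → A) (i : Fin k → ι)
    (hx : ∀ u, x u ∈ B (i u))
    (hy : ∀ u, y u ∈ B (i u)) (hycent : ∀ u, φ (y u) = 0)
    (halt : ∀ u u' : Fin k, (u : ℕ) + 1 = (u' : ℕ) → i u ≠ i u') :
    κ 2 ![(List.ofFn x).reverse.prod, (List.ofFn y).prod] = ∏ u : Fin k, κ 2 ![x u, y u] := by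
  have hword : IsAlternatingCentered φ (fun j => (B j : Set A))
      (List.ofFn fun u => (i u, y u)) :=
    { mem := List.forall_mem_ofFn_iff.2 hy
      centered := List.forall_mem_ofFn_iff.2 hycent
      isChain := List.isChain_ofFn.2 fun _ _ => halt _ _ rfl }
  have hyprod : φ (List.ofFn y).prod = 0 := by
    simpa only [List.map_ofFn, Function.comp_def] using
      hword.map_prod_eq_zero hκ hfree (mt List.ofFn_eq_nil_iff.1 hk.ne')
  simp only [hκ.cumulant_two, hycent, hyprod, mul_zero, sub_zero]
  exact IsAlternatingCentered.map_reverse_prod_mul_prod_eq_prod hφ1 hκ hfree hx hword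

/-- **Product formula for `κ_2(a*, b)` for words of the same shape (Lemma 2, second part).**
Let `(A, φ)` be a `*`-probability space with free cumulants `κ`, and let `(Alg i)` be
unital `*`-subalgebras that are freely independent in the cumulant sense. Let
`a = a_1 ⋯ a_k` and `b = b_1 ⋯ b_k` with `a_u, b_u ∈ Alg (i u)`, all centered, and
consecutive indices distinct. Then `κ_2(a*, b) = ∏_{u=1}^k κ_2(a_u*, b_u)`. -/
theorem kappa_two_star_word_same_shape
    {A : Type*} [Ring A] [Algebra ℂ A] [StarRing A] [StarModule ℂ A] {ι : Type*}
    (φ : A →ₗ[ℂ] ℂ) (hφ1 : φ 1 = 1)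
    (hpos : ∀ x : A, 0 ≤ φ (star x * x))
    (κ : ∀ n, MultilinearMap ℂ (fun _ : Fin n => A) ℂ)
    (hκ : MomentCumulant φ κ)
    (Alg : ι → StarSubalgebra ℂ A)
    (hfree : FreeIndepCumulant (fun i' => (Alg i' : Set A)) κ)
    (k : ℕ) (hk : 0 < k)
    (a b : Fin k → A) (i : Fin k → ι)
    (hamem : ∀ u, a u ∈ Alg (i u)) (hacent : ∀ u, φ (a u) = 0)
    (hbmem : ∀ u, b u ∈ Alg (i u)) (hbcent : ∀ u, φ (b u) = 0)
    (halt : ∀ u u' : Fin k, (u : ℕ) + 1 = (u' : ℕ) → i u ≠ i u') :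
    κ 2 ![star (List.ofFn a).prod, (List.ofFn b).prod] =
      ∏ u : Fin k, κ 2 ![star (a u), b u] := by
  rw [star_list_prod, List.map_ofFn]
  exact kappa_two_star_word_same_shape_general φ hφ1 κ hκ (fun j => (Alg j).toSubalgebra) hfree k hk
    _ b i (fun u => (Alg (i u)).star_mem' (hamem u)) hbmem hbcent halt
end
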